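/- arXiv:1410.7081 — 2 statements merged into one kernel-verified Lean document; each statement's English description precedes it below -/
import Mathlib

section
/- ∫₀¹ K'(k)³ dk = 5 ∫₀¹ k K'(k)³ dk = Γ(1/4)⁸/(128π²). -/
open scoped Real
open MeasureTheory

noncomputable def EllK (k : ℝ) : ℝ :=
  ∫ x in (0:ℝ)..(1:ℝ), 1 / Real.sqrt ((1 - x^2) * (1 - k^2 * x^2))

noncomputable def EllE (k : ℝ) : ℝ :=
  ∫ x in (0:ℝ)..(1:ℝ), Real.sqrt ((1 - k^2 * x^2) / (1 - x^2))

noncomputable def EllK' (k : ℝ) : ℝ := EllK (Real.sqrt (1 - k^2))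

section

open Set Filter Topology MeasureTheory

/-- Differentiation under the integral sign over a compact interval, for continuous data. -/
lemma hasDerivAt_intervalIntegral_of_continuousOn {F F' : ℝ → ℝ → ℝ} {U : Set ℝ} {a b x₀ : ℝ}
    (hU : IsOpen U) (hx₀ : x₀ ∈ U) (hF : ∀ x ∈ U, Continuous (F x))
    (hF' : ContinuousOn (Function.uncurry F') (U ×ˢ uIcc a b))
    (h : ∀ x ∈ U, ∀ t, HasDerivAt (fun y => F y t) (F' x t) x) :
    HasDerivAt (fun x => ∫ t in a..b, F x t) (∫ t in a..b, F' x₀ t) x₀ := by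
  obtain ⟨ε, hε, hball⟩ := Metric.nhds_basis_closedBall.mem_iff.1 (hU.mem_nhds hx₀)
  have hcomp : IsCompact (Metric.closedBall x₀ ε ×ˢ uIcc a b) :=
    (isCompact_closedBall x₀ ε).prod isCompact_uIcc
  obtain ⟨C, hC⟩ := hcomp.exists_bound_of_continuousOn
    (hF'.mono (prod_mono hball Subset.rfl))
  have hF'x : ContinuousOn (F' x₀) (uIcc a b) :=
    hF'.comp (f := fun t => (x₀, t)) (by fun_prop) (fun t ht => ⟨hx₀, ht⟩)
  refine (intervalIntegral.hasDerivAt_integral_of_dominated_loc_of_deriv_le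
    (bound := fun _ => C) (Metric.closedBall_mem_nhds x₀ hε) ?_ ?_ ?_ ?_ ?_ ?_).2
  · filter_upwards [hU.mem_nhds hx₀] with x hx
    exact (hF x hx).aestronglyMeasurable
  · exact (hF x₀ hx₀).intervalIntegrable _ _
  · exact (hF'x.intervalIntegrable).aestronglyMeasurable_restrict_uIoc
  · refine ae_of_all _ fun t ht x hx => ?_
    exact hC (x, t) ⟨hx, uIoc_subset_uIcc ht⟩
  · exact intervalIntegrable_const
  · exact ae_of_all _ fun t _ x hx => h x (hball hx) t

/-- The complete elliptic integral of the first kind in trigonometric form. -/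
noncomputable def trigK (k : ℝ) : ℝ :=
  ∫ θ in (0 : ℝ)..(π / 2), (Real.sqrt (1 - k ^ 2 * Real.sin θ ^ 2))⁻¹

/-- The complete elliptic integral of the second kind in trigonometric form. -/
noncomputable def trigE (k : ℝ) : ℝ :=
  ∫ θ in (0 : ℝ)..(π / 2), Real.sqrt (1 - k ^ 2 * Real.sin θ ^ 2)

lemma one_sub_sq_mul_sin_sq_pos {k : ℝ} (hk : k ∈ Ioo (-1 : ℝ) 1) (θ : ℝ) :
    0 < 1 - k ^ 2 * Real.sin θ ^ 2 := by
  have h1 : k ^ 2 < 1 := by rw [sq_lt_one_iff_abs_lt_one, abs_lt]; exact hk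
  have h2 := Real.sin_sq_le_one θ
  nlinarith [sq_nonneg k, sq_nonneg (Real.sin θ)]

lemma continuous_inv_sqrt_one_sub {k : ℝ} (hk : k ∈ Ioo (-1 : ℝ) 1) :
    Continuous fun θ => (Real.sqrt (1 - k ^ 2 * Real.sin θ ^ 2))⁻¹ :=
  Continuous.inv₀ (by fun_prop) fun θ =>
    (Real.sqrt_pos.2 (one_sub_sq_mul_sin_sq_pos hk θ)).ne'

lemma trigE_eq_integral_inv_cube {k : ℝ} (hk : k ∈ Ioo (-1 : ℝ) 1) :
    trigE k = (1 - k ^ 2) *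
      ∫ θ in (0 : ℝ)..(π / 2), (Real.sqrt (1 - k ^ 2 * Real.sin θ ^ 2))⁻¹ ^ 3 := by
  have hd : ∀ θ ∈ uIcc (0 : ℝ) (π / 2), HasDerivAt
      (fun θ => k ^ 2 * Real.sin θ * Real.cos θ * (Real.sqrt (1 - k ^ 2 * Real.sin θ ^ 2))⁻¹)
      (Real.sqrt (1 - k ^ 2 * Real.sin θ ^ 2) -
        (1 - k ^ 2) * (Real.sqrt (1 - k ^ 2 * Real.sin θ ^ 2))⁻¹ ^ 3) θ := by
    intro θ _
    have hpos := one_sub_sq_mul_sin_sq_pos hk θ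
    have hs := Real.sqrt_pos.2 hpos
    have h1 : HasDerivAt (fun θ => 1 - k ^ 2 * Real.sin θ ^ 2)
        (-(k ^ 2 * (2 * Real.sin θ * Real.cos θ))) θ := by
      have := (((Real.hasDerivAt_sin θ).pow 2).const_mul (k ^ 2)).const_sub 1
      refine this.congr_deriv ?_
      push_cast; ring
    have h2 := (h1.sqrt hpos.ne').inv hs.ne'
    have h3 := (((Real.hasDerivAt_sin θ).const_mul (k ^ 2)).mul (Real.hasDerivAt_cos θ)).mul h2
    refine h3.congr_deriv ?_
    have hsq := Real.sq_sqrt hpos.le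
    have hc : Real.cos θ ^ 2 = 1 - Real.sin θ ^ 2 := by
      have := Real.sin_sq_add_cos_sq θ; linarith
    simp only [Pi.mul_apply, Pi.inv_apply]
    set r := Real.sqrt (1 - k ^ 2 * Real.sin θ ^ 2)
    field_simp
    have h4 : r ^ 4 = (1 - k ^ 2 * Real.sin θ ^ 2) ^ 2 := by rw [← hsq]; ring
    rw [hc, h4, hsq]
    ring
  have hc := continuous_inv_sqrt_one_sub hk
  have h_int : IntervalIntegrable (fun θ => Real.sqrt (1 - k ^ 2 * Real.sin θ ^ 2) -
        (1 - k ^ 2) * (Real.sqrt (1 - k ^ 2 * Real.sin θ ^ 2))⁻¹ ^ 3)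
        MeasureTheory.volume 0 (π / 2) :=
    Continuous.intervalIntegrable (by fun_prop) _ _
  have h := intervalIntegral.integral_eq_sub_of_hasDerivAt hd h_int
  rw [intervalIntegral.integral_sub (Continuous.intervalIntegrable (by fun_prop) _ _)
    (Continuous.intervalIntegrable (by fun_prop) _ _), intervalIntegral.integral_const_mul] at h
  simp only [Real.cos_pi_div_two, Real.sin_zero, mul_zero, zero_mul, sub_self] at h
  rw [trigE]
  linarith

lemma hasDerivAt_trigK {k : ℝ} (hk : k ∈ Ioo (0 : ℝ) 1) :
    HasDerivAt trigK ((trigE k / (1 - k ^ 2) - trigK k) / k) k := by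
  have hk' : k ∈ Ioo (-1 : ℝ) 1 := ⟨by linarith [hk.1], hk.2⟩
  have h := hasDerivAt_intervalIntegral_of_continuousOn (a := 0) (b := π / 2) (x₀ := k)
    (F := fun k θ => (Real.sqrt (1 - k ^ 2 * Real.sin θ ^ 2))⁻¹)
    (F' := fun k θ => k * Real.sin θ ^ 2 * (Real.sqrt (1 - k ^ 2 * Real.sin θ ^ 2))⁻¹ ^ 3)
    isOpen_Ioo hk' (fun x hx => continuous_inv_sqrt_one_sub hx) ?_ ?_
  · refine h.congr_deriv ?_
    have hc := continuous_inv_sqrt_one_sub hk'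
    have hE := trigE_eq_integral_inv_cube hk'
    have hk2 : 1 - k ^ 2 ≠ 0 := by nlinarith [hk.1, hk.2]
    rw [hE, mul_div_cancel_left₀ _ hk2, trigK, eq_div_iff hk.1.ne', mul_comm,
      ← intervalIntegral.integral_const_mul, ← intervalIntegral.integral_sub
      (Continuous.intervalIntegrable (by fun_prop) _ _)
      (Continuous.intervalIntegrable (by fun_prop) _ _)]
    refine intervalIntegral.integral_congr fun θ _ => ?_
    have hpos := one_sub_sq_mul_sin_sq_pos hk' θ
    have hs := Real.sqrt_pos.2 hpos
    have hsq := Real.sq_sqrt hpos.le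
    set r := Real.sqrt (1 - k ^ 2 * Real.sin θ ^ 2)
    field_simp
    linarith
  · refine ContinuousOn.mul (by fun_prop) (ContinuousOn.pow (ContinuousOn.inv₀ (by fun_prop) ?_) 3)
    rintro ⟨x, t⟩ ⟨hx, _⟩
    exact (Real.sqrt_pos.2 (one_sub_sq_mul_sin_sq_pos hx t)).ne'
  · intro x hx t
    have hpos := one_sub_sq_mul_sin_sq_pos hx t
    have hs := Real.sqrt_pos.2 hpos
    have h1 : HasDerivAt (fun x => 1 - x ^ 2 * Real.sin t ^ 2) (-(2 * x * Real.sin t ^ 2)) x := by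
      refine (((hasDerivAt_pow 2 x).mul_const (Real.sin t ^ 2)).const_sub 1).congr_deriv ?_
      push_cast; ring
    refine ((h1.sqrt hpos.ne').inv hs.ne').congr_deriv ?_
    field_simp

lemma hasDerivAt_trigE {k : ℝ} (hk : k ∈ Ioo (0 : ℝ) 1) :
    HasDerivAt trigE ((trigE k - trigK k) / k) k := by
  have hk' : k ∈ Ioo (-1 : ℝ) 1 := ⟨by linarith [hk.1], hk.2⟩
  have h := hasDerivAt_intervalIntegral_of_continuousOn (a := 0) (b := π / 2) (x₀ := k)
    (F := fun k θ => Real.sqrt (1 - k ^ 2 * Real.sin θ ^ 2))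
    (F' := fun k θ => -(k * Real.sin θ ^ 2) * (Real.sqrt (1 - k ^ 2 * Real.sin θ ^ 2))⁻¹)
    isOpen_Ioo hk' (fun x hx => by fun_prop) ?_ ?_
  · refine h.congr_deriv ?_
    have hc := continuous_inv_sqrt_one_sub hk'
    rw [trigE, trigK, eq_div_iff hk.1.ne', mul_comm,
      ← intervalIntegral.integral_const_mul, ← intervalIntegral.integral_sub
      (Continuous.intervalIntegrable (by fun_prop) _ _)
      (Continuous.intervalIntegrable (by fun_prop) _ _)]
    refine intervalIntegral.integral_congr fun θ _ => ?_
    have hpos := one_sub_sq_mul_sin_sq_pos hk' θ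
    have hs := Real.sqrt_pos.2 hpos
    have hsq := Real.sq_sqrt hpos.le
    set r := Real.sqrt (1 - k ^ 2 * Real.sin θ ^ 2)
    field_simp
    linarith
  · refine ContinuousOn.mul (by fun_prop) (ContinuousOn.inv₀ (by fun_prop) ?_)
    rintro ⟨x, t⟩ ⟨hx, _⟩
    exact (Real.sqrt_pos.2 (one_sub_sq_mul_sin_sq_pos hx t)).ne'
  · intro x hx t
    have hpos := one_sub_sq_mul_sin_sq_pos hx t
    have hs := Real.sqrt_pos.2 hpos
    have h1 : HasDerivAt (fun x => 1 - x ^ 2 * Real.sin t ^ 2) (-(2 * x * Real.sin t ^ 2)) x := by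
      refine (((hasDerivAt_pow 2 x).mul_const (Real.sin t ^ 2)).const_sub 1).congr_deriv ?_
      push_cast; ring
    refine (h1.sqrt hpos.ne').congr_deriv ?_
    field_simp

lemma one_sub_sq_pos {k : ℝ} (hk : k ∈ Ioo (0 : ℝ) 1) : 0 < 1 - k ^ 2 := by
  nlinarith [hk.1, hk.2]

lemma sqrt_one_sub_sq_mem {k : ℝ} (hk : k ∈ Ioo (0 : ℝ) 1) :
    Real.sqrt (1 - k ^ 2) ∈ Ioo (0 : ℝ) 1 := by
  refine ⟨Real.sqrt_pos.2 (one_sub_sq_pos hk), ?_⟩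
  rw [Real.sqrt_lt' one_pos]
  nlinarith [hk.1]

lemma sqrt_one_sub_sqrt_sq {k : ℝ} (hk : k ∈ Ioo (0 : ℝ) 1) :
    Real.sqrt (1 - Real.sqrt (1 - k ^ 2) ^ 2) = k := by
  rw [Real.sq_sqrt (one_sub_sq_pos hk).le, sub_sub_cancel, Real.sqrt_sq hk.1.le]

/-- The complementary integral in trigonometric form. -/
noncomputable def trigK' (k : ℝ) : ℝ := trigK (Real.sqrt (1 - k ^ 2))

lemma hasDerivAt_sqrt_one_sub_sq {k : ℝ} (hk : k ∈ Ioo (0 : ℝ) 1) :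
    HasDerivAt (fun k => Real.sqrt (1 - k ^ 2)) (-k / Real.sqrt (1 - k ^ 2)) k := by
  have h1 : HasDerivAt (fun x : ℝ => 1 - x ^ 2) (-(2 * k)) k := by
    refine ((hasDerivAt_pow 2 k).const_sub 1).congr_deriv ?_
    push_cast; ring
  refine (h1.sqrt (one_sub_sq_pos hk).ne').congr_deriv ?_
  have := (sqrt_one_sub_sq_mem hk).1
  field_simp

lemma hasDerivAt_trigK' {k : ℝ} (hk : k ∈ Ioo (0 : ℝ) 1) :
    HasDerivAt trigK' ((k ^ 2 * trigK' k - trigE (Real.sqrt (1 - k ^ 2))) / (k * (1 - k ^ 2))) k := by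
  have hm := sqrt_one_sub_sq_mem hk
  refine ((hasDerivAt_trigK hm).comp k (hasDerivAt_sqrt_one_sub_sq hk)).congr_deriv ?_
  have hsq := Real.sq_sqrt (one_sub_sq_pos hk).le
  have h0 := hm.1
  have hk0 := hk.1
  have h2 := one_sub_sq_pos hk
  rw [trigK', hsq, sub_sub_cancel]
  generalize trigE (Real.sqrt (1 - k ^ 2)) = e
  generalize trigK (Real.sqrt (1 - k ^ 2)) = f
  field_simp
  rw [hsq]
  ring

lemma hasDerivAt_trigE_sqrt {k : ℝ} (hk : k ∈ Ioo (0 : ℝ) 1) :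
    HasDerivAt (fun k => trigE (Real.sqrt (1 - k ^ 2)))
      (k * (trigK' k - trigE (Real.sqrt (1 - k ^ 2))) / (1 - k ^ 2)) k := by
  have hm := sqrt_one_sub_sq_mem hk
  refine ((hasDerivAt_trigE hm).comp k (hasDerivAt_sqrt_one_sub_sq hk)).congr_deriv ?_
  have hsq := Real.sq_sqrt (one_sub_sq_pos hk).le
  have h0 := hm.1
  have h2 := one_sub_sq_pos hk
  rw [trigK']
  generalize trigE (Real.sqrt (1 - k ^ 2)) = e
  generalize trigK (Real.sqrt (1 - k ^ 2)) = f
  field_simp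
  rw [hsq]
  ring

lemma trigK_pos {k : ℝ} (hk : k ∈ Ioo (-1 : ℝ) 1) : 0 < trigK k :=
  intervalIntegral.intervalIntegral_pos_of_pos
    ((continuous_inv_sqrt_one_sub hk).intervalIntegrable _ _)
    (fun θ => inv_pos.2 (Real.sqrt_pos.2 (one_sub_sq_mul_sin_sq_pos hk θ))) (by positivity)

lemma trigK_le {k : ℝ} (hk : k ∈ Ioo (-1 : ℝ) 1) :
    trigK k ≤ π / 2 * (Real.sqrt (1 - k ^ 2))⁻¹ := by
  have h1 : k ^ 2 < 1 := by rw [sq_lt_one_iff_abs_lt_one, abs_lt]; exact hk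
  have : trigK k ≤ ∫ _ in (0 : ℝ)..(π / 2), (Real.sqrt (1 - k ^ 2))⁻¹ := by
    refine intervalIntegral.integral_mono (by positivity)
      ((continuous_inv_sqrt_one_sub hk).intervalIntegrable _ _) (by simp) fun θ => ?_
    have := Real.sin_sq_le_one θ
    exact inv_anti₀ (Real.sqrt_pos.2 (by linarith))
      (Real.sqrt_le_sqrt (by nlinarith [sq_nonneg k]))
  simpa using this

lemma trigE_le_trigK {k : ℝ} (hk : k ∈ Ioo (-1 : ℝ) 1) : trigE k ≤ trigK k := by
  refine intervalIntegral.integral_mono (by positivity)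
    (Continuous.intervalIntegrable (by fun_prop) _ _)
    ((continuous_inv_sqrt_one_sub hk).intervalIntegrable _ _) fun θ => ?_
  have hpos := one_sub_sq_mul_sin_sq_pos hk θ
  have h1 : Real.sqrt (1 - k ^ 2 * Real.sin θ ^ 2) ≤ 1 := by
    rw [Real.sqrt_le_one]; nlinarith [mul_nonneg (sq_nonneg k) (sq_nonneg (Real.sin θ))]
  exact h1.trans ((one_le_inv₀ (Real.sqrt_pos.2 hpos)).2 h1)

lemma trigK_sub_trigE_le {k : ℝ} (hk : k ∈ Ioo (-1 : ℝ) 1) :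
    trigK k - trigE k ≤ k ^ 2 * trigK k := by
  rw [trigK, trigE, ← intervalIntegral.integral_const_mul, ← intervalIntegral.integral_sub
      ((continuous_inv_sqrt_one_sub hk).intervalIntegrable _ _)
      (Continuous.intervalIntegrable (by fun_prop) _ _)]
  refine intervalIntegral.integral_mono (by positivity)
    (((continuous_inv_sqrt_one_sub hk).intervalIntegrable _ _).sub
      (Continuous.intervalIntegrable (by fun_prop) _ _))
    (((continuous_inv_sqrt_one_sub hk).intervalIntegrable _ _).const_mul _) fun θ => ?_
  have hpos := one_sub_sq_mul_sin_sq_pos hk θ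
  have hs := Real.sqrt_pos.2 hpos
  have hsq := Real.sq_sqrt hpos.le
  have := Real.sin_sq_le_one θ
  simp only
  set r := Real.sqrt (1 - k ^ 2 * Real.sin θ ^ 2)
  rw [← sub_nonneg]
  have : k ^ 2 * r⁻¹ - (r⁻¹ - r) = (k ^ 2 - 1 + r ^ 2) / r := by field_simp; ring
  rw [this, hsq]
  refine div_nonneg ?_ hs.le
  nlinarith [sq_nonneg k]

lemma continuous_trigE : Continuous trigE := by
  refine intervalIntegral.continuous_parametric_intervalIntegral_of_continuous'
    (f := fun k θ => Real.sqrt (1 - k ^ 2 * Real.sin θ ^ 2)) ?_ 0 (π / 2)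
  simp only [Function.uncurry_def]
  fun_prop

lemma trigE_zero : trigE 0 = π / 2 := by simp [trigE]

lemma trigE_one : trigE 1 = 1 := by
  have : trigE 1 = ∫ θ in (0 : ℝ)..(π / 2), Real.cos θ := by
    refine intervalIntegral.integral_congr fun θ hθ => ?_
    rw [uIcc_of_le (by positivity)] at hθ
    have : 0 ≤ Real.cos θ :=
      Real.cos_nonneg_of_mem_Icc ⟨by linarith [hθ.1, Real.pi_pos], hθ.2⟩
    have h2 : 1 - 1 ^ 2 * Real.sin θ ^ 2 = Real.cos θ ^ 2 := by
      have := Real.sin_sq_add_cos_sq θ; linarith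
    rw [h2, Real.sqrt_sq this]
  rw [this]
  simp

lemma tendsto_trigK_zero : Tendsto trigK (𝓝 0) (𝓝 (π / 2)) := by
  have hE : Tendsto trigE (𝓝 0) (𝓝 (π / 2)) := by
    rw [← trigE_zero]
    exact continuous_trigE.tendsto 0
  have hbound : Tendsto (fun x : ℝ => π / 2 * (Real.sqrt (1 - x ^ 2))⁻¹) (𝓝 0) (𝓝 (π / 2)) := by
    have : ContinuousAt (fun x : ℝ => π / 2 * (Real.sqrt (1 - x ^ 2))⁻¹) 0 :=
      ContinuousAt.mul (by fun_prop) (ContinuousAt.inv₀ (by fun_prop) (by simp))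
    simpa using this.tendsto
  have hmem : Ioo (-1 : ℝ) 1 ∈ 𝓝 (0 : ℝ) := Ioo_mem_nhds (by norm_num) one_pos
  refine tendsto_of_tendsto_of_tendsto_of_le_of_le' hE hbound ?_ ?_
  · filter_upwards [hmem] with x hx using trigE_le_trigK hx
  · filter_upwards [hmem] with x hx using trigK_le hx

lemma tendsto_trigK'_one : Tendsto trigK' (𝓝 1) (𝓝 (π / 2)) := by
  refine tendsto_trigK_zero.comp ?_
  have : Continuous fun k : ℝ => Real.sqrt (1 - k ^ 2) := by fun_prop
  simpa using this.tendsto 1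

/-- Legendre's relation. -/
lemma legendre_relation {k : ℝ} (hk : k ∈ Ioo (0 : ℝ) 1) :
    trigE k * trigK' k + trigE (Real.sqrt (1 - k ^ 2)) * trigK k - trigK k * trigK' k = π / 2 := by
  set f : ℝ → ℝ := fun k =>
    trigE k * trigK' k + trigE (Real.sqrt (1 - k ^ 2)) * trigK k - trigK k * trigK' k with hf
  have hderiv : ∀ x ∈ Ioo (0 : ℝ) 1, HasDerivAt f 0 x := by
    intro x hx
    have hKx := hasDerivAt_trigK hx
    have hPx := hasDerivAt_trigK' hx
    refine ((((hasDerivAt_trigE hx).mul hPx).add ((hasDerivAt_trigE_sqrt hx).mul hKx)).sub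
      (hKx.mul hPx)).congr_deriv ?_
    have h0 := hx.1
    have h2 := one_sub_sq_pos hx
    generalize trigE (Real.sqrt (1 - x ^ 2)) = e
    field_simp
    ring
  have hconst : ∀ x ∈ Ioo (0 : ℝ) 1, f x = f k := fun x hx =>
    isOpen_Ioo.is_const_of_deriv_eq_zero isPreconnected_Ioo
      (fun y hy => (hderiv y hy).differentiableAt.differentiableWithinAt)
      (fun y hy => (hderiv y hy).deriv) hx hk
  have hmem : Ioo (0 : ℝ) 1 ∈ 𝓝[>] (0 : ℝ) := Ioo_mem_nhdsGT one_pos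
  have hlim1 : Tendsto f (𝓝[>] 0) (𝓝 (f k)) := by
    refine tendsto_const_nhds.congr' ?_
    filter_upwards [hmem] with x hx using (hconst x hx).symm
  have hid : Tendsto (fun x : ℝ => x) (𝓝[>] 0) (𝓝 0) := tendsto_nhdsWithin_of_tendsto_nhds tendsto_id
  have hE' : Tendsto (fun x => trigE (Real.sqrt (1 - x ^ 2))) (𝓝[>] 0) (𝓝 1) := by
    have : Continuous fun x : ℝ => trigE (Real.sqrt (1 - x ^ 2)) :=
      continuous_trigE.comp (by fun_prop)
    have h := (this.tendsto 0).mono_left (nhdsWithin_le_nhds (s := Ioi 0))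
    simpa [trigE_one] using h
  have hK : Tendsto trigK (𝓝[>] 0) (𝓝 (π / 2)) :=
    tendsto_trigK_zero.mono_left nhdsWithin_le_nhds
  have hprod : Tendsto (fun x => (trigK x - trigE x) * trigK' x) (𝓝[>] 0) (𝓝 0) := by
    have hup : Tendsto (fun x => x * trigK x * (π / 2)) (𝓝[>] 0) (𝓝 0) := by
      simpa using (hid.mul hK).mul_const (π / 2)
    refine tendsto_of_tendsto_of_tendsto_of_le_of_le' tendsto_const_nhds hup ?_ ?_
    · filter_upwards [hmem] with x hx
      have hm := sqrt_one_sub_sq_mem hx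
      exact mul_nonneg (sub_nonneg.2 (trigE_le_trigK ⟨by linarith [hx.1], hx.2⟩))
        (trigK_pos ⟨by linarith [hm.1], hm.2⟩).le
    · filter_upwards [hmem] with x hx
      have hm := sqrt_one_sub_sq_mem hx
      have hx' : x ∈ Ioo (-1 : ℝ) 1 := ⟨by linarith [hx.1], hx.2⟩
      have hm' : Real.sqrt (1 - x ^ 2) ∈ Ioo (-1 : ℝ) 1 := ⟨by linarith [hm.1], hm.2⟩
      have h1 := trigK_sub_trigE_le hx'
      have h2 := trigK_le hm'
      rw [sqrt_one_sub_sqrt_sq hx] at h2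
      have h3 := trigK_pos hm'
      have h4 := trigK_pos hx'
      calc (trigK x - trigE x) * trigK' x ≤ (x ^ 2 * trigK x) * (π / 2 * x⁻¹) :=
            mul_le_mul h1 h2 h3.le (by positivity)
        _ = x * trigK x * (π / 2) := by
            have := hx.1
            field_simp
  have hlim2 : Tendsto f (𝓝[>] 0) (𝓝 (π / 2)) := by
    have h := (hE'.mul hK).sub hprod
    simp only [one_mul, sub_zero] at h
    refine h.congr fun x => ?_
    simp only [hf]
    ring
  exact tendsto_nhds_unique hlim1 hlim2

/-- The period ratio `K / K'`. -/
noncomputable def periodRatio (k : ℝ) : ℝ := trigK k / trigK' k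

lemma trigK'_pos {k : ℝ} (hk : k ∈ Ioo (0 : ℝ) 1) : 0 < trigK' k := by
  have hm := sqrt_one_sub_sq_mem hk
  exact trigK_pos ⟨by linarith [hm.1], hm.2⟩

lemma periodRatio_pos {k : ℝ} (hk : k ∈ Ioo (0 : ℝ) 1) : 0 < periodRatio k :=
  div_pos (trigK_pos ⟨by linarith [hk.1], hk.2⟩) (trigK'_pos hk)

lemma hasDerivAt_periodRatio {k : ℝ} (hk : k ∈ Ioo (0 : ℝ) 1) :
    HasDerivAt periodRatio (π / 2 / (k * (1 - k ^ 2) * trigK' k ^ 2)) k := by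
  have hP := trigK'_pos hk
  refine ((hasDerivAt_trigK hk).div (hasDerivAt_trigK' hk) hP.ne').congr_deriv ?_
  rw [← legendre_relation hk]
  have h0 := hk.1
  have h2 := one_sub_sq_pos hk
  generalize trigE (Real.sqrt (1 - k ^ 2)) = e
  field_simp
  ring

lemma injOn_periodRatio : InjOn periodRatio (Ioo 0 1) := by
  refine StrictMonoOn.injOn (strictMonoOn_of_deriv_pos (convex_Ioo 0 1)
    (fun k hk => (hasDerivAt_periodRatio hk).continuousAt.continuousWithinAt) fun k hk => ?_)
  rw [interior_Ioo] at hk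
  rw [(hasDerivAt_periodRatio hk).deriv]
  have := hk.1
  have := one_sub_sq_pos hk
  have := trigK'_pos hk
  positivity

lemma EllK_eq_trigK : EllK = trigK := by
  funext k
  have himg : Real.sin '' Ioo 0 (π / 2) = Ioo 0 1 := by
    ext y
    constructor
    · rintro ⟨θ, hθ, rfl⟩
      refine ⟨Real.sin_pos_of_pos_of_lt_pi hθ.1 (by linarith [hθ.2, Real.pi_pos]), ?_⟩
      have := Real.sin_lt_sin_of_lt_of_le_pi_div_two (by linarith [hθ.1, Real.pi_pos]) le_rfl hθ.2
      rwa [Real.sin_pi_div_two] at this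
    · intro hy
      exact ⟨Real.arcsin y, ⟨Real.arcsin_pos.2 hy.1, Real.arcsin_lt_pi_div_two.2 hy.2⟩,
        Real.sin_arcsin (by linarith [hy.1]) hy.2.le⟩
  have hinj : InjOn Real.sin (Ioo 0 (π / 2)) :=
    Real.injOn_sin.mono (Ioo_subset_Icc_self.trans (Icc_subset_Icc_left (by linarith [Real.pi_pos])))
  rw [EllK, trigK, intervalIntegral.integral_of_le zero_le_one,
    intervalIntegral.integral_of_le (by positivity), integral_Ioc_eq_integral_Ioo,
    integral_Ioc_eq_integral_Ioo, ← himg, integral_image_eq_integral_abs_deriv_smul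
    measurableSet_Ioo (fun θ _ => (Real.hasDerivAt_sin θ).hasDerivWithinAt) hinj]
  refine setIntegral_congr_fun measurableSet_Ioo fun θ hθ => ?_
  have hc : 0 < Real.cos θ := Real.cos_pos_of_mem_Ioo ⟨by linarith [hθ.1, Real.pi_pos], hθ.2⟩
  have h2 : 1 - Real.sin θ ^ 2 = Real.cos θ ^ 2 := by
    have := Real.sin_sq_add_cos_sq θ; linarith
  simp only [smul_eq_mul]
  rw [h2, Real.sqrt_mul (sq_nonneg _), Real.sqrt_sq hc.le, abs_of_pos hc, one_div, mul_inv,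
    mul_inv_cancel_left₀ hc.ne']

lemma EllK'_eq_trigK' : EllK' = trigK' := by
  funext k
  rw [EllK', EllK_eq_trigK, trigK']

/-- Gauss's symmetric form of the complete elliptic integral. -/
noncomputable def gaussIntegral (a b : ℝ) : ℝ :=
  ∫ x in Ioi (0 : ℝ), (Real.sqrt ((x ^ 2 + a ^ 2) * (x ^ 2 + b ^ 2)))⁻¹

lemma gaussIntegral_eq {a b : ℝ} (hb : 0 < b) (hab : b ≤ a) :
    gaussIntegral a b = a⁻¹ * trigK' (b / a) := by
  have ha : 0 < a := hb.trans_le hab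
  have himg : (fun θ => b * Real.tan θ) '' Ioo 0 (π / 2) = Ioi 0 := by
    ext y
    constructor
    · rintro ⟨θ, hθ, rfl⟩
      exact mul_pos hb (Real.tan_pos_of_pos_of_lt_pi_div_two hθ.1 hθ.2)
    · intro hy
      refine ⟨Real.arctan (y / b), ⟨Real.arctan_pos.2 (div_pos hy hb),
        Real.arctan_lt_pi_div_two _⟩, ?_⟩
      simp only [Real.tan_arctan]
      field_simp
  have hcos : ∀ θ ∈ Ioo 0 (π / 2), 0 < Real.cos θ := fun θ hθ =>
    Real.cos_pos_of_mem_Ioo ⟨by linarith [hθ.1, Real.pi_pos], hθ.2⟩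
  have hinj : InjOn (fun θ => b * Real.tan θ) (Ioo 0 (π / 2)) := by
    intro x hx y hy h
    exact Real.injOn_tan ⟨by linarith [hx.1, Real.pi_pos], hx.2⟩
      ⟨by linarith [hy.1, Real.pi_pos], hy.2⟩ (mul_left_cancel₀ hb.ne' h)
  rw [gaussIntegral, trigK', trigK, ← intervalIntegral.integral_const_mul,
    intervalIntegral.integral_of_le (by positivity), integral_Ioc_eq_integral_Ioo, ← himg,
    integral_image_eq_integral_abs_deriv_smul measurableSet_Ioo
    (fun θ hθ => ((Real.hasDerivAt_tan (hcos θ hθ).ne').const_mul b).hasDerivWithinAt) hinj]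
  refine setIntegral_congr_fun measurableSet_Ioo fun θ hθ => ?_
  have hc := hcos θ hθ
  have hs : Real.sin θ ^ 2 = 1 - Real.cos θ ^ 2 := by
    have := Real.sin_sq_add_cos_sq θ; linarith
  have hk : 0 ≤ 1 - (b / a) ^ 2 := by
    have h1 : b / a ≤ 1 := (div_le_one ha).2 hab
    have h0 : 0 ≤ b / a := by positivity
    nlinarith
  have hQ : 0 < a ^ 2 * Real.cos θ ^ 2 + b ^ 2 * (1 - Real.cos θ ^ 2) := by
    rw [← hs]; positivity
  have e1 : ((b * Real.tan θ) ^ 2 + a ^ 2) * ((b * Real.tan θ) ^ 2 + b ^ 2) =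
      (b / Real.cos θ ^ 2) ^ 2 * (a ^ 2 * Real.cos θ ^ 2 + b ^ 2 * (1 - Real.cos θ ^ 2)) := by
    rw [Real.tan_eq_sin_div_cos, mul_pow, div_pow, hs]
    field_simp
    ring
  have e2 : 1 - (1 - (b / a) ^ 2) * Real.sin θ ^ 2 =
      (a⁻¹) ^ 2 * (a ^ 2 * Real.cos θ ^ 2 + b ^ 2 * (1 - Real.cos θ ^ 2)) := by
    rw [hs]
    field_simp
    ring
  simp only [smul_eq_mul]
  rw [e1, Real.sq_sqrt hk, e2, Real.sqrt_mul (sq_nonneg _), Real.sqrt_mul (sq_nonneg _),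
    Real.sqrt_sq (by positivity), Real.sqrt_sq (by positivity), abs_of_pos (by positivity)]
  have := Real.sqrt_pos.2 hQ
  field_simp

lemma gaussIntegral_arith_geom_mean {a b : ℝ} (ha : 0 < a) (hb : 0 < b) :
    gaussIntegral a b = gaussIntegral ((a + b) / 2) (Real.sqrt (a * b)) := by
  have hab : 0 < a * b := mul_pos ha hb
  set f : ℝ → ℝ := fun x => (x - a * b / x) / 2
  have hf : ∀ x ∈ Ioi (0 : ℝ), HasDerivAt f ((x ^ 2 + a * b) / (2 * x ^ 2)) x := by
    intro x hx
    have hx0 : x ≠ 0 := (mem_Ioi.1 hx).ne'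
    refine (((hasDerivAt_id x).sub ((hasDerivAt_inv hx0).const_mul (a * b))).div_const 2).congr_deriv ?_
    field_simp
    ring
  have hinj : InjOn f (Ioi 0) := by
    intro x hx y hy h
    have hx0 : 0 < x := hx
    have hy0 : 0 < y := hy
    simp only [f] at h
    field_simp at h
    have : (x - y) * (x * y + a * b) = 0 := by linarith
    rcases mul_eq_zero.1 this with h | h
    · linarith
    · have := mul_pos hx0 hy0; linarith
  have himg : f '' Ioi 0 = univ := by
    refine eq_univ_of_forall fun u => ?_
    have h1 : 0 < u ^ 2 + a * b := by positivity
    have h2 : |u| < Real.sqrt (u ^ 2 + a * b) := by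
      rw [← Real.sqrt_sq_eq_abs]; exact Real.sqrt_lt_sqrt (sq_nonneg _) (by linarith)
    have h3 : 0 < u + Real.sqrt (u ^ 2 + a * b) := by
      have := neg_abs_le u; linarith
    refine ⟨u + Real.sqrt (u ^ 2 + a * b), h3, ?_⟩
    have h4 := Real.sq_sqrt h1.le
    simp only [f]
    field_simp
    nlinarith
  set g : ℝ → ℝ := fun x =>
    (Real.sqrt ((x ^ 2 + ((a + b) / 2) ^ 2) * (x ^ 2 + Real.sqrt (a * b) ^ 2)))⁻¹ with hg
  have hev : ∫ x, g x = 2 * gaussIntegral ((a + b) / 2) (Real.sqrt (a * b)) := by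
    rw [gaussIntegral, ← integral_comp_abs]
    simp only [hg, sq_abs]
  have hcv := integral_image_eq_integral_abs_deriv_smul measurableSet_Ioi
    (fun x hx => (hf x hx).hasDerivWithinAt) hinj g
  rw [himg, Measure.restrict_univ, hev] at hcv
  have : ∫ x in Ioi (0 : ℝ), |(x ^ 2 + a * b) / (2 * x ^ 2)| • g (f x) = 2 * gaussIntegral a b := by
    rw [gaussIntegral, ← integral_const_mul]
    refine setIntegral_congr_fun measurableSet_Ioi fun x hx => ?_
    have hx0 : 0 < x := hx
    have e : (f x ^ 2 + ((a + b) / 2) ^ 2) * (f x ^ 2 + Real.sqrt (a * b) ^ 2) =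
        ((x ^ 2 + a * b) / (4 * x ^ 2)) ^ 2 * ((x ^ 2 + a ^ 2) * (x ^ 2 + b ^ 2)) := by
      rw [Real.sq_sqrt hab.le]
      simp only [f]
      field_simp
      ring
    have hp : 0 < (x ^ 2 + a ^ 2) * (x ^ 2 + b ^ 2) := by positivity
    simp only [smul_eq_mul, hg]
    rw [e, Real.sqrt_mul (sq_nonneg _), Real.sqrt_sq (by positivity),
      abs_of_pos (by positivity)]
    have := Real.sqrt_pos.2 hp
    field_simp
    norm_num
  linarith

lemma trigK'_arith_geom_mean {a b : ℝ} (hb : 0 < b) (hab : b ≤ a) :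
    a⁻¹ * trigK' (b / a) = ((a + b) / 2)⁻¹ * trigK' (Real.sqrt (a * b) / ((a + b) / 2)) := by
  have ha : 0 < a := hb.trans_le hab
  have h : 0 < Real.sqrt (a * b) := Real.sqrt_pos.2 (mul_pos ha hb)
  rw [← gaussIntegral_eq hb hab, gaussIntegral_arith_geom_mean ha hb, gaussIntegral_eq h]
  rw [Real.sqrt_le_left (by positivity)]
  nlinarith [sq_nonneg (a - b)]

/-- Landen's transformation. -/
lemma trigK'_landen {k : ℝ} (hk : k ∈ Ioo (0 : ℝ) 1) :
    trigK' k = 2 / (1 + k) * trigK ((1 - k) / (1 + k)) := by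
  have h0 := hk.1
  have h := trigK'_arith_geom_mean h0 hk.2.le
  rw [inv_one, one_mul, div_one, one_mul] at h
  have h1 : 0 ≤ (1 - k) / (1 + k) := div_nonneg (by linarith [hk.2]) (by linarith)
  have h2 : 1 - (Real.sqrt k / ((1 + k) / 2)) ^ 2 = ((1 - k) / (1 + k)) ^ 2 := by
    rw [div_pow, Real.sq_sqrt h0.le]
    field_simp
    ring
  rw [h, trigK', h2, Real.sqrt_sq h1]
  field_simp

/-- The theta constant `∑ exp (-π n² t)` weighted by `n ^ j`. -/
noncomputable def thetaMoment (j : ℕ) (t : ℝ) : ℝ :=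
  ∑' n : ℤ, (n : ℝ) ^ j * Real.exp (-π * n ^ 2 * t)

/-- The alternating theta constant. -/
noncomputable def thetaAlt (t : ℝ) : ℝ :=
  ∑' n : ℤ, (-1 : ℝ) ^ n * Real.exp (-π * n ^ 2 * t)

lemma summable_abs_pow_mul_exp (j : ℕ) {t : ℝ} (ht : 0 < t) :
    Summable fun n : ℤ => |(n : ℝ)| ^ j * Real.exp (-π * n ^ 2 * t) := by
  refine (summable_pow_mul_jacobiTheta₂_term_bound 0 ht j).congr fun n => ?_
  push_cast
  congr 2
  ring

lemma summable_norm_thetaMoment (j : ℕ) {t : ℝ} (ht : 0 < t) :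
    Summable fun n : ℤ => ‖(n : ℝ) ^ j * Real.exp (-π * n ^ 2 * t)‖ := by
  refine (summable_abs_pow_mul_exp j ht).congr fun n => ?_
  rw [norm_mul, norm_pow, Real.norm_eq_abs, Real.norm_eq_abs, Real.abs_exp]

lemma summable_theta {t : ℝ} (ht : 0 < t) :
    Summable fun n : ℤ => Real.exp (-π * n ^ 2 * t) := by
  simpa using summable_abs_pow_mul_exp 0 ht

lemma abs_neg_one_zpow_mul_exp (n : ℤ) (x : ℝ) :
    ‖(-1 : ℝ) ^ n * Real.exp x‖ = Real.exp x := by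
  rw [norm_mul, norm_zpow, norm_neg, norm_one, one_zpow, one_mul, Real.norm_eq_abs, Real.abs_exp]

lemma summable_norm_thetaAlt {t : ℝ} (ht : 0 < t) :
    Summable fun n : ℤ => ‖(-1 : ℝ) ^ n * Real.exp (-π * n ^ 2 * t)‖ := by
  simpa only [abs_neg_one_zpow_mul_exp] using summable_theta ht

lemma thetaMoment_zero (t : ℝ) : thetaMoment 0 t = ∑' n : ℤ, Real.exp (-π * n ^ 2 * t) := by
  simp [thetaMoment]

lemma tsum_one_add_neg_one_zpow_mul (f : ℤ × ℤ → ℝ) :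
    ∑' p : ℤ × ℤ, (1 + (-1 : ℝ) ^ (p.1 + p.2)) * f p =
      ∑' p : ℤ × ℤ, 2 * f (p.1 + p.2, p.1 - p.2) := by
  have hinj : Function.Injective fun p : ℤ × ℤ => (p.1 + p.2, p.1 - p.2) := by
    rintro ⟨a, b⟩ ⟨c, d⟩ h
    simp only [Prod.mk.injEq] at h ⊢
    omega
  rw [← hinj.tsum_eq (f := fun p : ℤ × ℤ => (1 + (-1 : ℝ) ^ (p.1 + p.2)) * f p)]
  · refine tsum_congr fun p => ?_
    have : Even (p.1 + p.2 + (p.1 - p.2)) := ⟨p.1, by ring⟩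
    simp only
    rw [this.neg_one_zpow]
    norm_num
  · rintro ⟨m, n⟩ h
    rcases Int.even_or_odd (m + n) with he | ho
    · obtain ⟨a, ha⟩ := he
      refine ⟨(a, m - a), ?_⟩
      simp only [Prod.mk.injEq]
      omega
    · simp [ho.neg_one_zpow] at h

lemma theta_sq_add_thetaAlt_sq {t : ℝ} (ht : 0 < t) :
    thetaMoment 0 t ^ 2 + thetaAlt t ^ 2 = 2 * thetaMoment 0 (2 * t) ^ 2 := by
  have s1 := (summable_theta ht).norm
  have s2 := summable_norm_thetaAlt ht
  have s3 := (summable_theta (mul_pos two_pos ht)).norm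
  rw [thetaMoment_zero, thetaMoment_zero, thetaAlt, sq, sq, sq,
    tsum_mul_tsum_of_summable_norm s1 s1, tsum_mul_tsum_of_summable_norm s2 s2,
    tsum_mul_tsum_of_summable_norm s3 s3,
    ← (summable_mul_of_summable_norm s1 s1).tsum_add (summable_mul_of_summable_norm s2 s2),
    ← tsum_mul_left]
  have h := tsum_one_add_neg_one_zpow_mul fun p =>
    Real.exp (-π * p.1 ^ 2 * t) * Real.exp (-π * p.2 ^ 2 * t)
  refine Eq.trans (tsum_congr fun p => ?_) (h.trans (tsum_congr fun p => ?_))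
  · rw [zpow_add₀ (by norm_num)]
    ring
  · simp only
    rw [← Real.exp_add, ← Real.exp_add]
    push_cast
    congr 2
    ring

lemma theta_mul_thetaAlt {t : ℝ} (ht : 0 < t) :
    thetaMoment 0 t * thetaAlt t = thetaAlt (2 * t) ^ 2 := by
  have s1 := (summable_theta ht).norm
  have s2 := summable_norm_thetaAlt ht
  have s3 := summable_norm_thetaAlt (mul_pos two_pos ht)
  have h := tsum_one_add_neg_one_zpow_mul fun p =>
    (-1 : ℝ) ^ p.2 * (Real.exp (-π * p.1 ^ 2 * t) * Real.exp (-π * p.2 ^ 2 * t))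
  have e : 2 * (thetaMoment 0 t * thetaAlt t) = 2 * thetaAlt (2 * t) ^ 2 := by
    have e1 : 2 * (thetaMoment 0 t * thetaAlt t) =
        thetaMoment 0 t * thetaAlt t + thetaAlt t * thetaMoment 0 t := by ring
    rw [e1, thetaMoment_zero, thetaAlt, thetaAlt, sq, tsum_mul_tsum_of_summable_norm s1 s2,
      tsum_mul_tsum_of_summable_norm s2 s1, tsum_mul_tsum_of_summable_norm s3 s3,
      ← (summable_mul_of_summable_norm s1 s2).tsum_add (summable_mul_of_summable_norm s2 s1),
      ← tsum_mul_left]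
    refine Eq.trans (tsum_congr fun p => ?_) (h.trans (tsum_congr fun p => ?_))
    · have h2 : (-1 : ℝ) ^ p.2 * (-1 : ℝ) ^ p.2 = 1 := by
        rw [← zpow_add₀ (by norm_num), (Even.add_self p.2).neg_one_zpow]
      rw [zpow_add₀ (by norm_num)]
      linear_combination (-((-1 : ℝ) ^ p.1) * (Real.exp (-π * p.1 ^ 2 * t) *
        Real.exp (-π * p.2 ^ 2 * t))) * h2
    · have h2 : (-1 : ℝ) ^ (p.1 - p.2) = (-1 : ℝ) ^ p.1 * (-1 : ℝ) ^ p.2 := by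
        rw [← zpow_add₀ (by norm_num)]
        have : p.1 + p.2 = p.1 - p.2 + (p.2 + p.2) := by ring
        rw [this, zpow_add₀ (by norm_num), (Even.add_self p.2).neg_one_zpow, mul_one]
      simp only
      have h3 : Real.exp (-π * (p.1 + p.2 : ℤ) ^ 2 * t) * Real.exp (-π * (p.1 - p.2 : ℤ) ^ 2 * t) =
          Real.exp (-π * p.1 ^ 2 * (2 * t)) * Real.exp (-π * p.2 ^ 2 * (2 * t)) := by
        rw [← Real.exp_add, ← Real.exp_add]
        push_cast
        congr 1
        ring
      rw [h2, h3]
      ring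
  linarith

lemma thetaMoment_zero_pos {t : ℝ} (ht : 0 < t) : 0 < thetaMoment 0 t := by
  rw [thetaMoment_zero]
  exact (summable_theta ht).tsum_pos (fun n => (Real.exp_pos _).le) 0 (Real.exp_pos _)

lemma theta_one_div {t : ℝ} (ht : 0 < t) :
    thetaMoment 0 (1 / t) ^ 2 = t * thetaMoment 0 t ^ 2 := by
  have h := Real.tsum_exp_neg_mul_int_sq ht
  have e1 : (∑' n : ℤ, Real.exp (-π * t * (n : ℝ) ^ 2)) = thetaMoment 0 t := by
    rw [thetaMoment_zero]; refine tsum_congr fun n => ?_; congr 1; ring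
  have e2 : (∑' n : ℤ, Real.exp (-π / t * (n : ℝ) ^ 2)) = thetaMoment 0 (1 / t) := by
    rw [thetaMoment_zero]; refine tsum_congr fun n => ?_; congr 1; ring
  rw [e1, e2, ← Real.sqrt_eq_rpow] at h
  rw [h, mul_pow, div_pow, Real.sq_sqrt ht.le]
  field_simp

lemma tendsto_tsum_mul_exp_atTop {c : ℤ → ℝ} (hc : ∀ n, |c n| ≤ 1) :
    Tendsto (fun t => ∑' n : ℤ, c n * Real.exp (-π * n ^ 2 * t)) atTop (𝓝 (c 0)) := by
  have h : ∑' n : ℤ, (if n = 0 then c 0 else 0) = c 0 := tsum_ite_eq 0 _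
  rw [← h]
  refine tendsto_tsum_of_dominated_convergence (summable_theta one_pos) (fun n => ?_) ?_
  · by_cases hn : n = 0
    · simp [hn]
    · simp only [hn, if_false]
      have h2 : 0 < π * (n : ℝ) ^ 2 := by positivity
      have h3 : Tendsto (fun t : ℝ => Real.exp (-(π * (n : ℝ) ^ 2 * t))) atTop (𝓝 0) :=
        Real.tendsto_exp_neg_atTop_nhds_zero.comp (tendsto_id.const_mul_atTop h2)
      have h4 := h3.const_mul (c n)
      rw [mul_zero] at h4
      refine h4.congr fun t => ?_
      congr 2
      ring
  · filter_upwards [eventually_ge_atTop 1] with t ht n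
    rw [norm_mul, Real.norm_eq_abs, Real.norm_eq_abs, Real.abs_exp]
    have h1 : Real.exp (-π * n ^ 2 * t) ≤ Real.exp (-π * n ^ 2 * 1) := by
      apply Real.exp_le_exp.2
      have : 0 ≤ π * (n : ℝ) ^ 2 := by positivity
      nlinarith
    exact (mul_le_of_le_one_left (Real.exp_pos _).le (hc n)).trans h1

lemma tendsto_thetaMoment_zero_atTop : Tendsto (thetaMoment 0) atTop (𝓝 1) := by
  have h := tendsto_tsum_mul_exp_atTop (c := fun _ => 1) (by simp)
  refine h.congr fun t => ?_
  simp [thetaMoment]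

lemma tendsto_thetaAlt_atTop : Tendsto thetaAlt atTop (𝓝 1) := by
  have h := tendsto_tsum_mul_exp_atTop (c := fun n => (-1 : ℝ) ^ n) (by simp [abs_zpow])
  rw [zpow_zero] at h
  exact h

lemma tendsto_two_pow_mul_atTop {t : ℝ} (ht : 0 < t) :
    Tendsto (fun n : ℕ => 2 ^ n * t) atTop atTop :=
  (tendsto_pow_atTop_atTop_of_one_lt one_lt_two).atTop_mul_const ht

lemma thetaAlt_pos {t : ℝ} (ht : 0 < t) : 0 < thetaAlt t := by
  have hnn : 0 ≤ thetaAlt t := by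
    have h := theta_mul_thetaAlt ht
    by_contra! hneg
    nlinarith [mul_neg_of_pos_of_neg (thetaMoment_zero_pos ht) hneg, sq_nonneg (thetaAlt (2 * t))]
  refine hnn.lt_of_ne' fun h0 => ?_
  have hz : ∀ n : ℕ, thetaAlt (2 ^ n * t) = 0 := by
    intro n
    induction n with
    | zero => simpa using h0
    | succ n ih =>
      have h := theta_mul_thetaAlt (t := 2 ^ n * t) (by positivity)
      rw [ih, mul_zero, ← mul_assoc, ← pow_succ'] at h
      exact pow_eq_zero_iff two_ne_zero |>.1 h.symm
  have hl := tendsto_thetaAlt_atTop.comp (tendsto_two_pow_mul_atTop ht)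
  have hl2 : Tendsto (thetaAlt ∘ fun n : ℕ => 2 ^ n * t) atTop (𝓝 0) :=
    tendsto_const_nhds.congr fun n => (hz n).symm
  exact one_ne_zero (tendsto_nhds_unique hl hl2)

lemma thetaAlt_lt_theta {t : ℝ} (ht : 0 < t) : thetaAlt t < thetaMoment 0 t := by
  rw [thetaMoment_zero, thetaAlt]
  refine (summable_norm_thetaAlt ht).of_norm.tsum_lt_tsum (i := 1) (fun n => ?_) ?_ (summable_theta ht)
  · exact (le_abs_self _).trans (abs_neg_one_zpow_mul_exp n _).le
  · have := Real.exp_pos (-π * (1 : ℤ) ^ 2 * t)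
    rw [zpow_one]
    linarith

/-- The modulus `θ₄² / θ₃²`. -/
noncomputable def thetaModulus (t : ℝ) : ℝ := thetaAlt t ^ 2 / thetaMoment 0 t ^ 2

lemma thetaModulus_mem {t : ℝ} (ht : 0 < t) : thetaModulus t ∈ Ioo (0 : ℝ) 1 := by
  have h1 := thetaAlt_pos ht
  have h2 := thetaAlt_lt_theta ht
  have h3 := thetaMoment_zero_pos ht
  refine ⟨by rw [thetaModulus]; positivity, ?_⟩
  rw [thetaModulus, div_lt_one (by positivity)]
  exact pow_lt_pow_left₀ h2 h1.le two_ne_zero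

lemma trigK'_thetaModulus_two_mul {t : ℝ} (ht : 0 < t) :
    (thetaMoment 0 t ^ 2)⁻¹ * trigK' (thetaModulus t) =
      (thetaMoment 0 (2 * t) ^ 2)⁻¹ * trigK' (thetaModulus (2 * t)) := by
  have h1 := thetaAlt_pos ht
  have h2 := thetaAlt_lt_theta ht
  have h3 := thetaMoment_zero_pos ht
  rw [thetaModulus, trigK'_arith_geom_mean (by positivity)
    (pow_le_pow_left₀ h1.le h2.le 2), theta_sq_add_thetaAlt_sq ht, ← mul_pow,
    Real.sqrt_sq (by positivity), theta_mul_thetaAlt ht, mul_div_cancel_left₀ _ two_ne_zero,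
    thetaModulus]

lemma trigK'_thetaModulus {t : ℝ} (ht : 0 < t) :
    trigK' (thetaModulus t) = π / 2 * thetaMoment 0 t ^ 2 := by
  set u : ℝ → ℝ := fun t => (thetaMoment 0 t ^ 2)⁻¹ * trigK' (thetaModulus t) with hu
  have hiter : ∀ n : ℕ, u (2 ^ n * t) = u t := by
    intro n
    induction n with
    | zero => simp
    | succ n ih =>
      rw [pow_succ', mul_assoc, ← ih]
      exact (trigK'_thetaModulus_two_mul (by positivity)).symm
  have hmod : Tendsto thetaModulus atTop (𝓝 1) := by
    have h := (tendsto_thetaAlt_atTop.pow 2).div (tendsto_thetaMoment_zero_atTop.pow 2) (by norm_num)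
    rw [one_pow, div_one] at h
    exact h
  have hlim : Tendsto u atTop (𝓝 (π / 2)) := by
    have := ((tendsto_thetaMoment_zero_atTop.pow 2).inv₀ (by norm_num)).mul
      (tendsto_trigK'_one.comp hmod)
    simpa using this
  have h1 := hlim.comp (tendsto_two_pow_mul_atTop ht)
  have h2 : Tendsto (u ∘ fun n : ℕ => 2 ^ n * t) atTop (𝓝 (u t)) :=
    tendsto_const_nhds.congr fun n => (hiter n).symm
  have h3 := tendsto_nhds_unique h2 h1
  have h4 := thetaMoment_zero_pos ht
  rw [← h3]
  simp only [hu]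
  field_simp

lemma thetaModulus_one_div {t : ℝ} (ht : 0 < t) :
    Real.sqrt (1 - thetaModulus t ^ 2) = thetaModulus (1 / t) := by
  have ht2 : 0 < t / 2 := by positivity
  have h1t : 0 < 1 / t := by positivity
  have hA := thetaMoment_zero_pos ht2
  have hB := thetaMoment_zero_pos ht
  have e1 := theta_sq_add_thetaAlt_sq ht2
  have e2 := theta_mul_thetaAlt ht2
  have e3 := theta_sq_add_thetaAlt_sq h1t
  have e4 := theta_one_div ht
  have e5 := theta_one_div ht2
  have e6 : 1 / (t / 2) = 2 * (1 / t) := by field_simp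
  rw [e6] at e5
  rw [mul_div_cancel₀ t two_ne_zero] at e1 e2
  have e7 : thetaModulus (1 / t) = thetaMoment 0 (t / 2) ^ 2 / thetaMoment 0 t ^ 2 - 1 := by
    have : thetaAlt (1 / t) ^ 2 = t * thetaMoment 0 (t / 2) ^ 2 - t * thetaMoment 0 t ^ 2 := by
      rw [e4, e5] at e3; linarith
    rw [thetaModulus, this, e4]
    field_simp
  have e8 : 1 - thetaModulus t ^ 2 = thetaModulus (1 / t) ^ 2 := by
    rw [e7, thetaModulus, ← e2]
    have e9 : thetaAlt (t / 2) ^ 2 = 2 * thetaMoment 0 t ^ 2 - thetaMoment 0 (t / 2) ^ 2 := by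
      linarith
    field_simp
    rw [e9]
    ring
  rw [e8, Real.sqrt_sq (thetaModulus_mem h1t).1.le]

lemma periodRatio_thetaModulus {t : ℝ} (ht : 0 < t) : periodRatio (thetaModulus t) = t := by
  have hm := thetaModulus_mem ht
  have h1t : 0 < 1 / t := by positivity
  have h : trigK (thetaModulus t) = π / 2 * thetaMoment 0 (1 / t) ^ 2 := by
    rw [← trigK'_thetaModulus h1t, ← thetaModulus_one_div ht, trigK', sqrt_one_sub_sqrt_sq hm]
  have h3 := thetaMoment_zero_pos ht
  rw [periodRatio, h, trigK'_thetaModulus ht, theta_one_div ht]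
  field_simp

lemma image_periodRatio : periodRatio '' Ioo 0 1 = Ioi 0 := by
  ext t
  constructor
  · rintro ⟨k, hk, rfl⟩
    exact periodRatio_pos hk
  · intro ht
    exact ⟨thetaModulus t, thetaModulus_mem ht, periodRatio_thetaModulus ht⟩

/-- Jacobi's formula for `K'` as the square of a theta constant. -/
lemma theta_periodRatio_sq {k : ℝ} (hk : k ∈ Ioo (0 : ℝ) 1) :
    thetaMoment 0 (periodRatio k) ^ 2 = 2 / π * trigK' k := by
  have hT := periodRatio_pos hk
  have h : thetaModulus (periodRatio k) = k :=
    injOn_periodRatio (thetaModulus_mem hT) hk (periodRatio_thetaModulus hT)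
  have h2 := trigK'_thetaModulus hT
  rw [h] at h2
  rw [h2]
  field_simp

lemma hasDerivAt_thetaMoment (j : ℕ) {t : ℝ} (ht : 0 < t) :
    HasDerivAt (thetaMoment j) (-π * thetaMoment (j + 2) t) t := by
  have ht2 : 0 < t / 2 := by positivity
  have h := hasDerivAt_tsum_of_isPreconnected (t := Ioi (t / 2)) (y₀ := t) (y := t)
    (g := fun (n : ℤ) (s : ℝ) => (n : ℝ) ^ j * Real.exp (-π * n ^ 2 * s))
    (g' := fun (n : ℤ) (s : ℝ) => (n : ℝ) ^ j * (Real.exp (-π * n ^ 2 * s) * (-π * n ^ 2)))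
    ((summable_abs_pow_mul_exp (j + 2) ht2).mul_left π) isOpen_Ioi (convex_Ioi _).isPreconnected
    (fun n s _ => ?_) (fun n s hs => ?_) (half_lt_self ht)
    (summable_norm_thetaMoment j ht).of_norm (half_lt_self ht)
  · refine h.congr_deriv ?_
    rw [thetaMoment, ← tsum_mul_left]
    exact tsum_congr fun n => by ring
  · have := ((hasDerivAt_id s).const_mul (-π * (n : ℝ) ^ 2)).exp.const_mul ((n : ℝ) ^ j)
    simpa using this
  · have h1 : Real.exp (-π * n ^ 2 * s) ≤ Real.exp (-π * n ^ 2 * (t / 2)) := by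
      apply Real.exp_le_exp.2
      have : 0 ≤ π * (n : ℝ) ^ 2 := by positivity
      nlinarith [mem_Ioi.1 hs]
    have e : ‖(n : ℝ) ^ j * (Real.exp (-π * n ^ 2 * s) * (-π * n ^ 2))‖ =
        π * (|(n : ℝ)| ^ (j + 2) * Real.exp (-π * n ^ 2 * s)) := by
      simp only [norm_mul, norm_pow, norm_neg, Real.norm_eq_abs, Real.abs_exp, abs_of_pos Real.pi_pos]
      ring
    rw [e]
    gcongr

/-- The weight-five combination of derivatives of the theta constant. -/
noncomputable def thetaBracket (t : ℝ) : ℝ :=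
  π ^ 2 * (thetaMoment 0 t * thetaMoment 4 t - 3 * thetaMoment 2 t ^ 2)

lemma theta_mul_thetaMoment_two {k : ℝ} (hk : k ∈ Ioo (0 : ℝ) 1) :
    2 * (thetaMoment 0 (periodRatio k) * (-π * thetaMoment 2 (periodRatio k))) =
      (2 / π) ^ 2 * (trigK' k ^ 2 * (k ^ 2 * trigK' k - trigE (Real.sqrt (1 - k ^ 2)))) := by
  have hT := hasDerivAt_periodRatio hk
  have hφ := (hasDerivAt_thetaMoment 0 (periodRatio_pos hk)).comp k hT
  have hP := (hasDerivAt_trigK' hk).const_mul (2 / π)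
  have h := (hφ.pow 2).unique (hP.congr_of_eventuallyEq ?_)
  · have hw := one_sub_sq_pos hk
    have hk0 := hk.1
    have hP := trigK'_pos hk
    simp only [Function.comp_apply, zero_add, Nat.cast_ofNat, Nat.reduceSub, pow_one] at h
    field_simp at h ⊢
    linear_combination h
  · filter_upwards [isOpen_Ioo.mem_nhds hk] with x hx
    exact theta_periodRatio_sq hx

lemma thetaBracket_periodRatio {k : ℝ} (hk : k ∈ Ioo (0 : ℝ) 1) :
    thetaBracket (periodRatio k) = (2 / π) ^ 3 / 2 * (k ^ 2 * (1 - k ^ 2) * trigK' k ^ 5) := by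
  have hT := hasDerivAt_periodRatio hk
  have hφ := (hasDerivAt_thetaMoment 0 (periodRatio_pos hk)).comp k hT
  have hφ2 := (hasDerivAt_thetaMoment 2 (periodRatio_pos hk)).comp k hT
  have hP := hasDerivAt_trigK' hk
  have hE := hasDerivAt_trigE_sqrt hk
  have h := ((hφ.mul (hφ2.const_mul (-π))).const_mul 2).unique
    ((((hP.pow 2).mul ((((hasDerivAt_id k).pow 2).mul hP).sub hE)).const_mul
      ((2 / π) ^ 2)).congr_of_eventuallyEq ?_)
  · have hw := one_sub_sq_pos hk
    have hk0 := hk.1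
    have hP := trigK'_pos hk
    have h1 := theta_mul_thetaMoment_two hk
    have h2 := theta_periodRatio_sq hk
    have h3 := congrArg (· ^ 2) h1
    simp only [Function.comp_apply, zero_add, thetaBracket, Nat.cast_ofNat, Nat.reduceSub, pow_one,
      Nat.reduceAdd, id_eq, Pi.pow_apply, Pi.mul_apply, Pi.sub_apply, mul_one] at h h3 ⊢
    generalize trigE (Real.sqrt (1 - k ^ 2)) = e at *
    generalize trigK' k = P at *
    generalize thetaMoment 0 (periodRatio k) = x at *
    generalize thetaMoment 2 (periodRatio k) = y at *
    generalize thetaMoment 4 (periodRatio k) = z at *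
    have h4 : π ^ 5 * y ^ 2 = 2 * P ^ 3 * (k ^ 2 * P - e) ^ 2 := by
      have h5 : (2 * (x * (-π * y))) ^ 2 = 4 * (2 / π * P) * (π * y) ^ 2 := by rw [← h2]; ring
      rw [h5] at h3
      field_simp at h3
      linear_combination h3 / 4
    have h6 : π ^ 5 * (y ^ 2 + x * z) =
        8 * P ^ 3 * (k ^ 2 * P - e) ^ 2 + 4 * k ^ 2 * (1 - k ^ 2) * P ^ 5 := by
      field_simp at h
      linear_combination h
    field_simp
    linear_combination h6 - 4 * h4
  · filter_upwards [isOpen_Ioo.mem_nhds hk] with x hx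
    exact theta_mul_thetaMoment_two hx

lemma thetaBracket_mul_deriv {k : ℝ} (hk : k ∈ Ioo (0 : ℝ) 1) :
    thetaBracket (periodRatio k) * |π / 2 / (k * (1 - k ^ 2) * trigK' k ^ 2)| =
      2 / π ^ 2 * (k * trigK' k ^ 3) := by
  have hw := one_sub_sq_pos hk
  have hk0 := hk.1
  have hP := trigK'_pos hk
  rw [thetaBracket_periodRatio hk, abs_of_pos (by positivity)]
  field_simp

lemma abs_deriv_smul_thetaBracket {k : ℝ} (hk : k ∈ Ioo (0 : ℝ) 1) :
    |π / 2 / (k * (1 - k ^ 2) * trigK' k ^ 2)| •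
        (periodRatio k ^ 3 * thetaBracket (periodRatio k)) = 2 / π ^ 2 * (k * trigK k ^ 3) := by
  have hP := trigK'_pos hk
  rw [smul_eq_mul, mul_left_comm, mul_comm |_|, thetaBracket_mul_deriv hk, periodRatio]
  field_simp

lemma integrableOn_mul_trigK_cube_iff :
    IntegrableOn (fun k => k * trigK k ^ 3) (Ioo 0 1) ↔
      IntegrableOn (fun t => t ^ 3 * thetaBracket t) (Ioi 0) := by
  rw [← image_periodRatio, integrableOn_image_iff_integrableOn_abs_deriv_smul measurableSet_Ioo
    (fun k hk => (hasDerivAt_periodRatio hk).hasDerivWithinAt) injOn_periodRatio,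
    integrableOn_congr_fun (fun k hk => abs_deriv_smul_thetaBracket hk) measurableSet_Ioo]
  exact (integrable_const_mul_iff (by simp [Real.pi_ne_zero]) _).symm

lemma integral_mul_trigK_cube :
    ∫ k in Ioo 0 1, k * trigK k ^ 3 = π ^ 2 / 2 * ∫ t in Ioi 0, t ^ 3 * thetaBracket t := by
  rw [← image_periodRatio, integral_image_eq_integral_abs_deriv_smul measurableSet_Ioo
    (fun k hk => (hasDerivAt_periodRatio hk).hasDerivWithinAt) injOn_periodRatio,
    setIntegral_congr_fun measurableSet_Ioo (fun k hk => abs_deriv_smul_thetaBracket hk),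
    integral_const_mul]
  field_simp

/-- The periods `1, i` of the square lattice. -/
noncomputable def gaussianPeriods : PeriodPair where
  ω₁ := 1
  ω₂ := Complex.I
  indep := by
    rw [LinearIndependent.pair_iff]
    intro s t h
    have h1 := congrArg Complex.re h
    have h2 := congrArg Complex.im h
    simp at h1 h2
    exact ⟨h1, h2⟩

lemma gaussianPeriods_equiv_symm (p : ℤ × ℤ) :
    ((gaussianPeriods.latticeEquivProd.symm p : gaussianPeriods.lattice) : ℂ) =
      p.1 + p.2 * Complex.I := by
  rw [PeriodPair.latticeEquiv_symm_apply]
  simp [gaussianPeriods]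

lemma hasSum_gaussian_G {r : ℕ} (hr : 2 < r) :
    HasSum (fun p : ℤ × ℤ => ((p.1 + p.2 * Complex.I : ℂ) ^ r)⁻¹) (gaussianPeriods.G r) := by
  have h := gaussianPeriods.hasSum_sumInvPow 0 hr
  rw [PeriodPair.sumInvPow_zero, ← gaussianPeriods.latticeEquivProd.symm.toEquiv.hasSum_iff] at h
  refine h.congr_fun fun p => ?_
  simp [gaussianPeriods_equiv_symm]

lemma summable_inv_sq_add_sq_sq :
    Summable fun p : ℤ × ℤ => (((p.1 : ℝ) ^ 2 + (p.2 : ℝ) ^ 2) ^ 2)⁻¹ := by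
  refine (hasSum_gaussian_G (r := 4) (by norm_num)).summable.norm.congr fun p => ?_
  have h : ‖(p.1 + p.2 * Complex.I : ℂ)‖ ^ 2 = (p.1 : ℝ) ^ 2 + (p.2 : ℝ) ^ 2 := by
    rw [Complex.sq_norm, Complex.normSq_apply]
    simp
    ring
  rw [norm_inv, norm_pow, ← h]
  ring

lemma hasSum_gaussian_G_four_re :
    HasSum (fun p : ℤ × ℤ => ((p.1 : ℝ) ^ 4 - 6 * (p.1 : ℝ) ^ 2 * (p.2 : ℝ) ^ 2 + (p.2 : ℝ) ^ 4) *
      ((((p.1 : ℝ) ^ 2 + (p.2 : ℝ) ^ 2) ^ 4)⁻¹)) (gaussianPeriods.G 4).re := by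
  refine (Complex.hasSum_re (hasSum_gaussian_G (r := 4) (by norm_num))).congr_fun fun p => ?_
  have h : (p.1 + p.2 * Complex.I : ℂ) ^ 4 =
      (((p.1 : ℝ) ^ 4 - 6 * (p.1 : ℝ) ^ 2 * (p.2 : ℝ) ^ 2 + (p.2 : ℝ) ^ 4 : ℝ) : ℂ) +
      ((4 * (p.1 : ℝ) ^ 3 * p.2 - 4 * p.1 * (p.2 : ℝ) ^ 3 : ℝ) : ℂ) * Complex.I := by
    push_cast
    linear_combination (6 * (p.1 : ℂ) ^ 2 * (p.2 : ℂ) ^ 2 + 4 * p.1 * (p.2 : ℂ) ^ 3 * Complex.I +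
      (p.2 : ℂ) ^ 4 * (Complex.I ^ 2 - 1)) * Complex.I_sq
  rw [h, Complex.inv_re, Complex.normSq_add_mul_I, Complex.add_re, Complex.re_ofReal_mul,
    Complex.I_re, mul_zero, add_zero, Complex.ofReal_re, div_eq_mul_inv]
  congr 2
  ring

lemma integrableOn_cube_mul_exp {a : ℝ} (ha : 0 < a) :
    IntegrableOn (fun t : ℝ => t ^ 3 * Real.exp (-a * t)) (Ioi 0) := by
  refine (integrableOn_rpow_mul_exp_neg_mul_rpow (p := 1) (s := 3) (by norm_num) one_pos
    ha).congr_fun (fun t _ => ?_) measurableSet_Ioi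
  simp only [Real.rpow_one]
  norm_cast

lemma integral_cube_mul_exp {a : ℝ} (ha : 0 < a) :
    ∫ t in Ioi 0, t ^ 3 * Real.exp (-a * t) = 6 / a ^ 4 := by
  have h := Real.integral_rpow_mul_exp_neg_mul_Ioi (a := 4) (by norm_num) ha
  have hΓ : Real.Gamma 4 = 6 := by
    have e : (4 : ℝ) = (3 : ℕ) + 1 := by norm_num
    rw [e, Real.Gamma_nat_eq_factorial]
    norm_num [Nat.factorial]
  rw [hΓ] at h
  refine (setIntegral_congr_fun measurableSet_Ioi fun t _ => ?_).trans (h.trans ?_)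
  · have : (4 - 1 : ℝ) = (3 : ℕ) := by norm_num
    simp only [this, Real.rpow_natCast, neg_mul]
  · have : (4 : ℝ) = (4 : ℕ) := by norm_num
    rw [this, Real.rpow_natCast]
    field_simp

/-- A function which is a sum of functions with summable `L¹` norms is integrable. -/
lemma integrable_of_hasSum_of_summable_integral_norm {α ι : Type*} [MeasurableSpace α]
    {μ : Measure α} [Countable ι] {F : ι → α → ℝ} {f : α → ℝ} (hF : ∀ i, Integrable (F i) μ)
    (hs : Summable fun i => ∫ a, ‖F i a‖ ∂μ) (hf : AEStronglyMeasurable f μ)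
    (h : ∀ᵐ a ∂μ, f a = ∑' i, F i a) : Integrable f μ := by
  refine ⟨hf, ?_⟩
  calc ∫⁻ a, ‖f a‖ₑ ∂μ ≤ ∫⁻ a, ∑' i, ‖F i a‖ₑ ∂μ := by
        refine lintegral_mono_ae ?_
        filter_upwards [h] with a ha
        rw [ha]
        exact enorm_tsum_le_tsum_enorm
    _ = ∑' i, ∫⁻ a, ‖F i a‖ₑ ∂μ := lintegral_tsum fun i => (hF i).1.enorm
    _ = ∑' i, ENNReal.ofReal (∫ a, ‖F i a‖ ∂μ) := by
        simp only [ofReal_integral_norm_eq_lintegral_enorm (hF _)]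
    _ < ⊤ := hs.tsum_ofReal_ne_top.lt_top

/-- The summands of `t ^ 3 * thetaBracket t`. -/
noncomputable def bracketTerm (p : ℤ × ℤ) (t : ℝ) : ℝ :=
  π ^ 2 * ((p.1 : ℝ) ^ 4 - 3 * (p.1 : ℝ) ^ 2 * (p.2 : ℝ) ^ 2) *
    (t ^ 3 * Real.exp (-(π * ((p.1 : ℝ) ^ 2 + (p.2 : ℝ) ^ 2)) * t))

lemma tsum_bracketTerm {t : ℝ} (ht : 0 < t) :
    t ^ 3 * thetaBracket t = ∑' p, bracketTerm p t := by
  have s0 := summable_norm_thetaMoment 0 ht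
  have s2 := summable_norm_thetaMoment 2 ht
  have s4 := summable_norm_thetaMoment 4 ht
  rw [thetaBracket, mul_comm (thetaMoment 0 t), sq (thetaMoment 2 t), thetaMoment, thetaMoment,
    thetaMoment, tsum_mul_tsum_of_summable_norm s4 s0, tsum_mul_tsum_of_summable_norm s2 s2,
    ← tsum_mul_left, ← (summable_mul_of_summable_norm s4 s0).tsum_sub
      ((summable_mul_of_summable_norm s2 s2).mul_left 3), ← tsum_mul_left, ← tsum_mul_left]
  refine tsum_congr fun p => ?_
  have e : -(π * ((p.1 : ℝ) ^ 2 + (p.2 : ℝ) ^ 2)) * t = -π * p.1 ^ 2 * t + -π * p.2 ^ 2 * t := by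
    ring
  rw [bracketTerm, e, Real.exp_add]
  ring

lemma sq_add_sq_pos_of_ne {p : ℤ × ℤ} (hp : p ≠ 0) : 0 < (p.1 : ℝ) ^ 2 + (p.2 : ℝ) ^ 2 := by
  rcases eq_or_ne p.1 0 with h | h
  · have h2 : p.2 ≠ 0 := fun h2 => hp (Prod.ext h h2)
    positivity
  · positivity

lemma integrableOn_bracketTerm (p : ℤ × ℤ) : IntegrableOn (bracketTerm p) (Ioi 0) := by
  rcases eq_or_ne p 0 with rfl | hp
  · have : bracketTerm 0 = 0 := by ext t; simp [bracketTerm]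
    rw [this]
    exact integrableOn_zero
  · exact (integrableOn_cube_mul_exp (mul_pos Real.pi_pos (sq_add_sq_pos_of_ne hp))).const_mul _

lemma integral_bracketTerm (p : ℤ × ℤ) :
    ∫ t in Ioi 0, bracketTerm p t = 6 / π ^ 2 *
      (((p.1 : ℝ) ^ 4 - 3 * (p.1 : ℝ) ^ 2 * (p.2 : ℝ) ^ 2) *
        (((p.1 : ℝ) ^ 2 + (p.2 : ℝ) ^ 2) ^ 4)⁻¹) := by
  rcases eq_or_ne p 0 with rfl | hp
  · simp [bracketTerm]
  · have h := sq_add_sq_pos_of_ne hp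
    simp only [bracketTerm]
    rw [integral_const_mul, integral_cube_mul_exp (mul_pos Real.pi_pos h)]
    field_simp

lemma abs_quartic_le (a b : ℝ) : |a ^ 4 - 3 * a ^ 2 * b ^ 2| ≤ 3 * (a ^ 2 + b ^ 2) ^ 2 := by
  rw [abs_le]
  constructor <;> nlinarith [sq_nonneg a, sq_nonneg b, sq_nonneg (a ^ 2), sq_nonneg (b ^ 2),
    mul_nonneg (sq_nonneg a) (sq_nonneg b)]

lemma summable_integral_norm_bracketTerm :
    Summable fun p => ∫ t in Ioi 0, ‖bracketTerm p t‖ := by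
  refine Summable.of_nonneg_of_le (fun p => integral_nonneg fun t => norm_nonneg _) (fun p => ?_)
    (summable_inv_sq_add_sq_sq.mul_left (18 / π ^ 2))
  rcases eq_or_ne p 0 with rfl | hp
  · simp [bracketTerm]
  · have h := sq_add_sq_pos_of_ne hp
    have e : ∫ t in Ioi 0, ‖bracketTerm p t‖ =
        |π ^ 2 * ((p.1 : ℝ) ^ 4 - 3 * (p.1 : ℝ) ^ 2 * (p.2 : ℝ) ^ 2)| *
          (6 / (π * ((p.1 : ℝ) ^ 2 + (p.2 : ℝ) ^ 2)) ^ 4) := by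
      rw [← integral_cube_mul_exp (mul_pos Real.pi_pos h), ← integral_const_mul]
      refine setIntegral_congr_fun measurableSet_Ioi fun t ht => ?_
      have : 0 ≤ t ^ 3 := pow_nonneg (le_of_lt ht) 3
      simp only [bracketTerm, norm_mul, Real.norm_eq_abs, abs_mul, Real.abs_exp, abs_of_nonneg this]
    rw [e, abs_mul, abs_of_pos (by positivity : 0 < π ^ 2)]
    refine (mul_le_mul_of_nonneg_right (mul_le_mul_of_nonneg_left
      (abs_quartic_le _ _) (by positivity)) (by positivity)).trans (le_of_eq ?_)
    field_simp
    norm_num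

lemma hasSum_integral_bracketTerm :
    HasSum (fun p : ℤ × ℤ => 6 / π ^ 2 *
      (((p.1 : ℝ) ^ 4 - 3 * (p.1 : ℝ) ^ 2 * (p.2 : ℝ) ^ 2) *
        (((p.1 : ℝ) ^ 2 + (p.2 : ℝ) ^ 2) ^ 4)⁻¹)) (∫ t in Ioi 0, t ^ 3 * thetaBracket t) := by
  have h := hasSum_integral_of_summable_integral_norm integrableOn_bracketTerm
    summable_integral_norm_bracketTerm
  simp only [integral_bracketTerm] at h
  rwa [← setIntegral_congr_fun measurableSet_Ioi fun t ht => tsum_bracketTerm ht] at h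

lemma integrableOn_cube_mul_thetaBracket :
    IntegrableOn (fun t => t ^ 3 * thetaBracket t) (Ioi 0) := by
  have hc : ∀ j, ContinuousOn (thetaMoment j) (Ioi 0) := fun j t ht =>
    (hasDerivAt_thetaMoment j ht).continuousAt.continuousWithinAt
  refine integrable_of_hasSum_of_summable_integral_norm integrableOn_bracketTerm
    summable_integral_norm_bracketTerm ?_ ?_
  · refine ContinuousOn.aestronglyMeasurable ?_ measurableSet_Ioi
    simp only [thetaBracket]
    have h0 := hc 0
    have h2 := hc 2
    have h4 := hc 4
    fun_prop
  · filter_upwards [ae_restrict_mem measurableSet_Ioi] with t ht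
    exact tsum_bracketTerm ht

lemma integral_cube_mul_thetaBracket :
    ∫ t in Ioi 0, t ^ 3 * thetaBracket t = 3 / π ^ 2 * (gaussianPeriods.G 4).re := by
  have h1 := hasSum_integral_bracketTerm
  have h2 := (Equiv.prodComm ℤ ℤ).hasSum_iff.2 h1
  have h3 := (h1.add h2).unique ((hasSum_gaussian_G_four_re.mul_left (6 / π ^ 2)).congr_fun
    fun p => ?_)
  · linear_combination h3 / 2
  · simp only [Function.comp_apply, Equiv.prodComm_apply, Prod.fst_swap, Prod.snd_swap,
      add_comm ((p.2 : ℝ) ^ 2)]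
    ring

lemma integrableOn_mul_trigK_cube : IntegrableOn (fun k => k * trigK k ^ 3) (Ioo 0 1) :=
  integrableOn_mul_trigK_cube_iff.2 integrableOn_cube_mul_thetaBracket

lemma integral_mul_trigK_cube_eq :
    ∫ k in Ioo 0 1, k * trigK k ^ 3 = 3 / 2 * (gaussianPeriods.G 4).re := by
  rw [integral_mul_trigK_cube, integral_cube_mul_thetaBracket]
  field_simp

lemma gaussian_G_four_re_pos : 0 < (gaussianPeriods.G 4).re := by
  have h : 0 < ∫ k in Ioo 0 1, k * trigK k ^ 3 := by
    refine (setIntegral_pos_iff_support_of_nonneg_ae ?_ integrableOn_mul_trigK_cube).2 ?_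
    · filter_upwards [ae_restrict_mem measurableSet_Ioo] with k hk
      have := hk.1
      have := trigK_pos ⟨by linarith [hk.1], hk.2⟩
      simp only [Pi.zero_apply]
      positivity
    · refine lt_of_lt_of_le ?_ (measure_mono (s := Ioo (0 : ℝ) 1) fun k hk => ⟨?_, hk⟩)
      · simp
      · have := hk.1
        have := trigK_pos ⟨by linarith [hk.1], hk.2⟩
        rw [Function.mem_support]
        positivity
  rw [integral_mul_trigK_cube_eq] at h
  linarith

lemma integrableOn_trigK_cube : IntegrableOn (fun k => trigK k ^ 3) (Ioo 0 1) := by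
  have hc : ContinuousOn trigK (Ioo 0 1) := fun k hk =>
    (hasDerivAt_trigK hk).continuousAt.continuousWithinAt
  have hb : IntegrableOn (fun k => π ^ 3 + 2 * (k * trigK k ^ 3)) (Ioo 0 1) :=
    (integrableOn_const (by simp)).add (integrableOn_mul_trigK_cube.const_mul 2)
  refine hb.mono' ((hc.pow 3).aestronglyMeasurable measurableSet_Ioo) ?_
  filter_upwards [ae_restrict_mem measurableSet_Ioo] with k hk
  have hk0 := hk.1
  have hm : k ∈ Ioo (-1 : ℝ) 1 := ⟨by linarith, hk.2⟩
  have hK := trigK_pos hm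
  rw [Real.norm_of_nonneg (by positivity)]
  rcases le_total k (1 / 2) with h | h
  · have h1 : (1 / 2 : ℝ) ≤ Real.sqrt (1 - k ^ 2) := Real.le_sqrt_of_sq_le (by nlinarith)
    have h2 : (Real.sqrt (1 - k ^ 2))⁻¹ ≤ 2 := by
      rw [inv_le_comm₀ (by linarith) two_pos]
      linarith
    have h3 : trigK k ≤ π := by
      refine (trigK_le hm).trans ?_
      nlinarith [Real.pi_pos]
    have h4 := pow_le_pow_left₀ hK.le h3 3
    have h5 : 0 < k * trigK k ^ 3 := by positivity
    linarith
  · have h4 : 0 < trigK k ^ 3 := by positivity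
    have h5 : 0 < π ^ 3 := by positivity
    nlinarith

lemma landen_mem {k : ℝ} (hk : k ∈ Ioo (0 : ℝ) 1) : (1 - k) / (1 + k) ∈ Ioo (0 : ℝ) 1 := by
  have h0 := hk.1
  have h1 := hk.2
  exact ⟨div_pos (by linarith) (by linarith), (div_lt_one (by linarith)).2 (by linarith)⟩

lemma landen_landen {k : ℝ} (hk : k ∈ Ioo (0 : ℝ) 1) :
    (1 - (1 - k) / (1 + k)) / (1 + (1 - k) / (1 + k)) = k := by
  have h0 := hk.1
  field_simp
  ring

lemma involution_image {g : ℝ → ℝ} (hg : ∀ k ∈ Ioo (0 : ℝ) 1, g k ∈ Ioo (0 : ℝ) 1)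
    (hgg : ∀ k ∈ Ioo (0 : ℝ) 1, g (g k) = k) : g '' Ioo 0 1 = Ioo 0 1 := by
  ext k
  exact ⟨fun ⟨l, hl, h⟩ => h ▸ hg l hl, fun hk => ⟨g k, hg k hk, hgg k hk⟩⟩

lemma integral_involution {g g' f : ℝ → ℝ} (hg : ∀ k ∈ Ioo (0 : ℝ) 1, g k ∈ Ioo (0 : ℝ) 1)
    (hgg : ∀ k ∈ Ioo (0 : ℝ) 1, g (g k) = k) (hd : ∀ k ∈ Ioo (0 : ℝ) 1, HasDerivAt g (g' k) k) :
    ∫ k in Ioo 0 1, f k = ∫ k in Ioo 0 1, |g' k| * f (g k) := by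
  have hinj : InjOn g (Ioo 0 1) := fun k hk l hl h => by rw [← hgg k hk, h, hgg l hl]
  have h := integral_image_eq_integral_abs_deriv_smul measurableSet_Ioo
    (fun k hk => (hd k hk).hasDerivWithinAt) hinj f
  rwa [involution_image hg hgg] at h

lemma integral_landen (f : ℝ → ℝ) :
    ∫ k in Ioo 0 1, f k * trigK' k ^ 3 =
      ∫ k in Ioo 0 1, 2 * (1 + k) * f ((1 - k) / (1 + k)) * trigK k ^ 3 := by
  rw [integral_involution (g := fun k => (1 - k) / (1 + k)) (g' := fun k => -(2 / (1 + k) ^ 2))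
    (fun k hk => landen_mem hk) (fun k hk => landen_landen hk) fun k hk => ?_]
  · refine setIntegral_congr_fun measurableSet_Ioo fun k hk => ?_
    have h0 := hk.1
    have e : trigK' ((1 - k) / (1 + k)) = (1 + k) * trigK k := by
      rw [trigK'_landen (landen_mem hk), landen_landen hk]
      congr 1
      field_simp
      ring
    simp only [e, abs_neg]
    rw [abs_of_pos (by positivity)]
    field_simp
  · have h0 := hk.1
    refine (((hasDerivAt_id k).const_sub 1).div ((hasDerivAt_id k).const_add 1)
      (by simp only [id]; linarith)).congr_deriv ?_
    simp only [id]
    field_simp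
    ring

lemma integral_mul_trigK'_cube :
    ∫ k in Ioo 0 1, k * trigK' k ^ 3 = ∫ k in Ioo 0 1, k * trigK k ^ 3 := by
  rw [integral_involution (g := fun k => Real.sqrt (1 - k ^ 2)) (fun k hk => sqrt_one_sub_sq_mem hk)
    (fun k hk => sqrt_one_sub_sqrt_sq hk) fun k hk => hasDerivAt_sqrt_one_sub_sq hk]
  refine setIntegral_congr_fun measurableSet_Ioo fun k hk => ?_
  have h0 := hk.1
  have h1 := (sqrt_one_sub_sq_mem hk).1
  simp only [trigK', sqrt_one_sub_sqrt_sq hk]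
  rw [neg_div, abs_neg, abs_of_pos (by positivity)]
  field_simp

lemma integral_trigK'_cube :
    ∫ k in Ioo 0 1, trigK' k ^ 3 = 5 * ∫ k in Ioo 0 1, k * trigK k ^ 3 := by
  have h1 := integral_landen fun _ => 1
  have h2 := integral_landen fun k => k
  have i1 := integrableOn_trigK_cube
  have i2 := integrableOn_mul_trigK_cube
  have e1 : ∫ k in Ioo 0 1, 2 * (1 + k) * (1 : ℝ) * trigK k ^ 3 =
      2 * ((∫ k in Ioo 0 1, trigK k ^ 3) + ∫ k in Ioo 0 1, k * trigK k ^ 3) := by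
    rw [← integral_add i1 i2, ← integral_const_mul]
    congr 1 with k
    ring
  have e2 : ∫ k in Ioo 0 1, 2 * (1 + k) * ((1 - k) / (1 + k)) * trigK k ^ 3 =
      2 * ((∫ k in Ioo 0 1, trigK k ^ 3) - ∫ k in Ioo 0 1, k * trigK k ^ 3) := by
    rw [← integral_sub i1 i2, ← integral_const_mul]
    refine setIntegral_congr_fun measurableSet_Ioo fun k hk => ?_
    have h0 := hk.1
    field_simp
  simp only [one_mul] at h1
  rw [e1] at h1
  rw [e2, integral_mul_trigK'_cube] at h2
  linarith

lemma hasSum_gaussian_weierstrassP (z : ℂ) :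
    HasSum (fun p : ℤ × ℤ => 1 / (z - (p.1 + p.2 * Complex.I)) ^ 2 -
      1 / ((p.1 : ℂ) + p.2 * Complex.I) ^ 2) (gaussianPeriods.weierstrassP z) := by
  have h := gaussianPeriods.hasSum_weierstrassP z
  rw [← gaussianPeriods.latticeEquivProd.symm.toEquiv.hasSum_iff] at h
  refine h.congr_fun fun p => ?_
  simp [gaussianPeriods_equiv_symm]

lemma hasSum_gaussian_derivWeierstrassP (z : ℂ) :
    HasSum (fun p : ℤ × ℤ => -2 / (z - (p.1 + p.2 * Complex.I)) ^ 3)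
      (gaussianPeriods.derivWeierstrassP z) := by
  have h := gaussianPeriods.hasSum_derivWeierstrassP z
  rw [← gaussianPeriods.latticeEquivProd.symm.toEquiv.hasSum_iff] at h
  refine h.congr_fun fun p => ?_
  simp [gaussianPeriods_equiv_symm]

lemma im_eq_zero_of_hasSum_conj {f : ℤ × ℤ → ℂ} {s : ℂ} (hs : HasSum f s)
    (h : ∀ m n, (starRingEnd ℂ) (f (m, n)) = f (m, -n)) : s.im = 0 := by
  have h1 := (Complex.hasSum_conj'.2 hs)
  have h2 := ((Equiv.refl ℤ).prodCongr (Equiv.neg ℤ)).hasSum_iff.2 hs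
  exact Complex.conj_eq_iff_im.1 (h1.unique (h2.congr_fun fun p => h p.1 p.2))

lemma gaussian_weierstrassP_im (x : ℝ) : (gaussianPeriods.weierstrassP x).im = 0 := by
  refine im_eq_zero_of_hasSum_conj (hasSum_gaussian_weierstrassP x) fun m n => ?_
  simp

lemma gaussian_derivWeierstrassP_im (x : ℝ) : (gaussianPeriods.derivWeierstrassP x).im = 0 := by
  refine im_eq_zero_of_hasSum_conj (hasSum_gaussian_derivWeierstrassP x) fun m n => ?_
  simp [map_ofNat]

lemma gaussian_G_four_im : (gaussianPeriods.G 4).im = 0 := by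
  refine im_eq_zero_of_hasSum_conj (hasSum_gaussian_G (by norm_num)) fun m n => ?_
  simp

lemma gaussian_G_six : gaussianPeriods.G 6 = 0 := by
  have h := hasSum_gaussian_G (r := 6) (by norm_num)
  have h2 := ((Equiv.prodComm ℤ ℤ).trans ((Equiv.neg ℤ).prodCongr (Equiv.refl ℤ))).hasSum_iff.2 h
  refine self_eq_neg.1 (h2.unique (h.neg.congr_fun fun p => ?_))
  have e : (-p.2 + p.1 * Complex.I : ℂ) = Complex.I * (p.1 + p.2 * Complex.I) := by
    linear_combination -(p.2 : ℂ) * Complex.I_sq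
  have e6 : Complex.I ^ 6 = -1 := by
    linear_combination (Complex.I ^ 4 - Complex.I ^ 2 + 1) * Complex.I_sq
  simp [e, mul_pow, e6, inv_neg]

lemma notMem_gaussian_lattice {z : ℂ} (h0 : 0 < z.re) (h1 : z.re < 1) :
    z ∉ gaussianPeriods.lattice := by
  intro h
  obtain ⟨m, n, e⟩ := PeriodPair.mem_lattice.1 h
  have e2 := congrArg Complex.re e
  simp [gaussianPeriods] at e2
  rw [← e2] at h0 h1
  norm_cast at h0 h1
  omega

lemma gaussian_weierstrassP_relation {z : ℂ} (h : z ∉ gaussianPeriods.lattice) :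
    gaussianPeriods.derivWeierstrassP z ^ 2 =
      4 * gaussianPeriods.weierstrassP z ^ 3 - gaussianPeriods.g₂ * gaussianPeriods.weierstrassP z := by
  rw [gaussianPeriods.derivWeierstrassP_sq z h, PeriodPair.g₃, gaussian_G_six]
  ring

/-- The restriction of the square-lattice `℘` to the real line. -/
noncomputable def wp (x : ℝ) : ℝ := (gaussianPeriods.weierstrassP x).re

/-- The restriction of the square-lattice `℘'` to the real line. -/
noncomputable def wp' (x : ℝ) : ℝ := (gaussianPeriods.derivWeierstrassP x).re

/-- The positive root of `4 e² = g₂`. -/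
noncomputable def wpRoot : ℝ := Real.sqrt (15 * (gaussianPeriods.G 4).re)

lemma wpRoot_pos : 0 < wpRoot := Real.sqrt_pos.2 (mul_pos (by norm_num) gaussian_G_four_re_pos)

lemma wpRoot_sq : wpRoot ^ 2 = 15 * (gaussianPeriods.G 4).re :=
  Real.sq_sqrt (mul_pos (by norm_num) gaussian_G_four_re_pos).le

lemma gaussian_g₂ : gaussianPeriods.g₂ = ((4 * wpRoot ^ 2 : ℝ) : ℂ) := by
  rw [wpRoot_sq, PeriodPair.g₂]
  apply Complex.ext
  · simp; ring
  · simp [gaussian_G_four_im]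

lemma ofReal_wp (x : ℝ) : ((wp x : ℝ) : ℂ) = gaussianPeriods.weierstrassP x :=
  Complex.ext rfl (by simp [gaussian_weierstrassP_im])

lemma ofReal_wp' (x : ℝ) : ((wp' x : ℝ) : ℂ) = gaussianPeriods.derivWeierstrassP x :=
  Complex.ext rfl (by simp [gaussian_derivWeierstrassP_im])

lemma hasDerivAt_gaussian_weierstrassP {z : ℂ} (h : z ∉ gaussianPeriods.lattice) :
    HasDerivAt gaussianPeriods.weierstrassP (gaussianPeriods.derivWeierstrassP z) z := by
  rw [← gaussianPeriods.deriv_weierstrassP]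
  exact (gaussianPeriods.analyticOnNhd_weierstrassP z h).differentiableAt.hasDerivAt

lemma notMem_lattice_of_mem_Ioo {x : ℝ} (hx : x ∈ Ioo (0 : ℝ) 1) :
    (x : ℂ) ∉ gaussianPeriods.lattice :=
  notMem_gaussian_lattice (by simpa using hx.1) (by simpa using hx.2)

lemma hasDerivAt_wp {x : ℝ} (hx : x ∈ Ioo (0 : ℝ) 1) : HasDerivAt wp (wp' x) x :=
  (hasDerivAt_gaussian_weierstrassP (notMem_lattice_of_mem_Ioo hx)).real_of_complex

lemma wp'_sq {x : ℝ} (hx : x ∈ Ioo (0 : ℝ) 1) :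
    wp' x ^ 2 = 4 * wp x * (wp x ^ 2 - wpRoot ^ 2) := by
  have h := gaussian_weierstrassP_relation (notMem_lattice_of_mem_Ioo hx)
  rw [← ofReal_wp, ← ofReal_wp', gaussian_g₂] at h
  norm_cast at h
  rw [h]
  ring

lemma tendsto_wp_zero : Tendsto wp (𝓝[>] 0) atTop := by
  have h1 : ∀ x : ℝ, wp x = (gaussianPeriods.weierstrassPExcept 0 x).re + (x ^ 2)⁻¹ := by
    intro x
    have h := gaussianPeriods.weierstrassPExcept_def 0 (x : ℂ)
    have e : (1 / ((x : ℂ) - 0) ^ 2) = ((x ^ 2)⁻¹ : ℝ) := by push_cast; simp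
    simp only [ZeroMemClass.coe_zero] at h
    rw [h, e, zero_pow two_ne_zero, div_zero, zero_sub, Complex.add_re, Complex.neg_re,
      Complex.ofReal_re, wp]
    ring
  have h2 : ContinuousAt (fun x : ℝ => (gaussianPeriods.weierstrassPExcept 0 x).re) 0 := by
    have h : ContinuousAt (gaussianPeriods.weierstrassPExcept 0) ((0 : ℝ) : ℂ) := by
      simpa using (gaussianPeriods.analyticAt_weierstrassPExcept 0).continuousAt
    exact Complex.continuous_re.continuousAt.comp
      (h.comp (f := fun x : ℝ => (x : ℂ)) Complex.continuous_ofReal.continuousAt)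
  have h3 : Tendsto (fun x : ℝ => (x ^ 2)⁻¹) (𝓝[>] 0) atTop := by
    refine tendsto_inv_nhdsGT_zero.comp (tendsto_nhdsWithin_iff.2 ⟨?_, ?_⟩)
    · have : Tendsto (fun x : ℝ => x ^ 2) (𝓝 0) (𝓝 (0 ^ 2)) := (continuous_pow 2).tendsto 0
      rw [zero_pow two_ne_zero] at this
      exact this.mono_left nhdsWithin_le_nhds
    · filter_upwards [self_mem_nhdsWithin] with x hx
      exact pow_pos (mem_Ioi.1 hx) 2
  exact ((h2.tendsto.mono_left nhdsWithin_le_nhds).add_atTop h3).congr fun x => (h1 x).symm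

lemma gaussian_deriv_derivWeierstrassP {z : ℂ} (h0 : 0 < z.re) (h1 : z.re < 1) :
    HasDerivAt gaussianPeriods.derivWeierstrassP
      (6 * gaussianPeriods.weierstrassP z ^ 2 - gaussianPeriods.g₂ / 2) z := by
  set U : Set ℂ := Complex.re ⁻¹' Ioo 0 1 with hU
  have hUo : IsOpen U := isOpen_Ioo.preimage Complex.continuous_re
  have hUc : IsPreconnected U := ((convex_Ioo 0 1).linear_preimage Complex.reLm).isPreconnected
  have hUl : U ⊆ (gaussianPeriods.lattice : Set ℂ)ᶜ := fun z hz => notMem_gaussian_lattice hz.1 hz.2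
  have a1 := gaussianPeriods.analyticOnNhd_weierstrassP.mono hUl
  have a2 := gaussianPeriods.analyticOnNhd_derivWeierstrassP.mono hUl
  have a3 := a2.deriv
  have hprod : ∀ z ∈ U, gaussianPeriods.derivWeierstrassP z *
      (deriv gaussianPeriods.derivWeierstrassP z -
        (6 * gaussianPeriods.weierstrassP z ^ 2 - gaussianPeriods.g₂ / 2)) = 0 := by
    intro z hz
    have d1 := hasDerivAt_gaussian_weierstrassP (hUl hz)
    have d2 := (a2 z hz).differentiableAt.hasDerivAt
    have h := (d2.pow 2).unique ((((d1.pow 3).const_mul 4).sub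
      (d1.const_mul gaussianPeriods.g₂)).congr_of_eventuallyEq ?_)
    · simp at h
      linear_combination h / 2
    · filter_upwards [hUo.mem_nhds hz] with w hw
      exact gaussian_weierstrassP_relation (hUl hw)
  rcases AnalyticOnNhd.eq_zero_or_eq_zero_of_mul_eq_zero a2
    (a3.sub ((analyticOnNhd_const.mul (a1.pow 2)).sub analyticOnNhd_const)) hprod hUc with h | h
  · exfalso
    have hd : ∀ x ∈ Ioo (0 : ℝ) 1, HasDerivAt wp 0 x := fun x hx => by
      have := hasDerivAt_wp hx
      rwa [wp', h x (by simpa [hU] using hx), Complex.zero_re] at this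
    have hc : ∀ x ∈ Ioo (0 : ℝ) 1, wp x = wp (1 / 2) := fun x hx =>
      isOpen_Ioo.is_const_of_deriv_eq_zero isPreconnected_Ioo
        (fun y hy => (hd y hy).differentiableAt.differentiableWithinAt)
        (fun y hy => (hd y hy).deriv) hx (by norm_num)
    obtain ⟨x, hx, hx2⟩ := ((tendsto_wp_zero.eventually_gt_atTop (wp (1 / 2))).and
      (Ioo_mem_nhdsGT one_pos)).exists
    exact hx.ne' (hc x hx2)
  · have := (a2 z ⟨h0, h1⟩).differentiableAt.hasDerivAt
    rwa [sub_eq_zero.1 (h z ⟨h0, h1⟩)] at this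

lemma hasDerivAt_wp' {x : ℝ} (hx : x ∈ Ioo (0 : ℝ) 1) :
    HasDerivAt wp' (6 * wp x ^ 2 - 2 * wpRoot ^ 2) x := by
  have h := (gaussian_deriv_derivWeierstrassP (z := x) (by simpa using hx.1)
    (by simpa using hx.2)).real_of_complex
  refine h.congr_deriv ?_
  rw [← ofReal_wp, gaussian_g₂]
  have : (6 * (wp x : ℂ) ^ 2 - ((4 * wpRoot ^ 2 : ℝ) : ℂ) / 2) =
      ((6 * wp x ^ 2 - 2 * wpRoot ^ 2 : ℝ) : ℂ) := by push_cast; ring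
  rw [this, Complex.ofReal_re]

lemma continuousOn_wp : ContinuousOn wp (Ioo 0 1) := fun _ hx =>
  (hasDerivAt_wp hx).continuousAt.continuousWithinAt

lemma wpRoot_le_wp {x : ℝ} (hx : x ∈ Ioo (0 : ℝ) 1) : wpRoot ≤ wp x := by
  have he := wpRoot_pos
  by_contra! hlt
  have hneg : wp x ≤ 0 := by
    by_contra! hpos
    have h := wp'_sq hx
    nlinarith [sq_nonneg (wp' x), mul_pos hpos (by nlinarith : 0 < wpRoot ^ 2 - wp x ^ 2)]
  obtain ⟨y, hy, hy2⟩ := ((tendsto_wp_zero.eventually_gt_atTop wpRoot).and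
    (Ioo_mem_nhdsGT one_pos)).exists
  obtain ⟨w, hw, hw2⟩ := isPreconnected_Ioo.intermediate_value hx hy2 continuousOn_wp
    (show wpRoot / 2 ∈ Icc (wp x) (wp y) from ⟨by linarith, by linarith⟩)
  have h := wp'_sq hw
  rw [hw2] at h
  nlinarith [sq_nonneg (wp' w), pow_pos he 3]

lemma wp'_half : wp' (1 / 2) = 0 := by
  have h1 := gaussianPeriods.derivWeierstrassP_neg (1 / 2)
  have h2 := gaussianPeriods.derivWeierstrassP_add_coe (-(1 / 2))
    ⟨gaussianPeriods.ω₁, gaussianPeriods.ω₁_mem_lattice⟩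
  have e : (-(1 / 2) + gaussianPeriods.ω₁ : ℂ) = 1 / 2 := by
    simp only [gaussianPeriods]
    norm_num
  rw [e, h1] at h2
  have h3 : gaussianPeriods.derivWeierstrassP (1 / 2) = 0 := self_eq_neg.1 h2
  rw [wp']
  push_cast
  rw [h3, Complex.zero_re]

lemma half_mem_Ioo : (1 / 2 : ℝ) ∈ Ioo (0 : ℝ) 1 := by norm_num

lemma wp_half : wp (1 / 2) = wpRoot := by
  have h := wp'_sq half_mem_Ioo
  have h2 := wpRoot_le_wp half_mem_Ioo
  have he := wpRoot_pos
  rw [wp'_half, zero_pow two_ne_zero, zero_eq_mul] at h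
  rcases h with h | h
  · linarith
  · nlinarith

lemma wp'_neg {x : ℝ} (hx : x ∈ Ioo (0 : ℝ) (1 / 2)) : wp' x < 0 := by
  have hm : StrictMonoOn wp' (Ioo 0 1) := by
    refine strictMonoOn_of_deriv_pos (convex_Ioo 0 1)
      (fun y hy => (hasDerivAt_wp' hy).continuousAt.continuousWithinAt) fun y hy => ?_
    rw [interior_Ioo] at hy
    rw [(hasDerivAt_wp' hy).deriv]
    nlinarith [wpRoot_le_wp hy, wpRoot_pos]
  rw [← wp'_half]
  exact hm ⟨hx.1, by linarith [hx.2]⟩ half_mem_Ioo hx.2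

lemma strictAntiOn_wp : StrictAntiOn wp (Ioc 0 (1 / 2)) := by
  refine strictAntiOn_of_deriv_neg (convex_Ioc 0 (1 / 2))
    (continuousOn_wp.mono fun x hx => ⟨hx.1, by linarith [hx.2]⟩) fun y hy => ?_
  rw [interior_Ioc] at hy
  rw [(hasDerivAt_wp ⟨hy.1, by linarith [hy.2]⟩).deriv]
  exact wp'_neg hy

lemma wpRoot_lt_wp {x : ℝ} (hx : x ∈ Ioo (0 : ℝ) (1 / 2)) : wpRoot < wp x := by
  rw [← wp_half]
  exact strictAntiOn_wp ⟨hx.1, hx.2.le⟩ ⟨by norm_num, le_rfl⟩ hx.2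

/-- The substitution turning the arc of `℘` into a beta integral. -/
noncomputable def wpSubst (x : ℝ) : ℝ := (wpRoot / wp x) ^ 2

lemma wpSubst_image : wpSubst '' Ioo 0 (1 / 2) = Ioo 0 1 := by
  have he := wpRoot_pos
  ext u
  constructor
  · rintro ⟨x, hx, rfl⟩
    have h := wpRoot_lt_wp hx
    have hp : 0 < wp x := he.trans h
    refine ⟨by rw [wpSubst]; positivity, ?_⟩
    exact pow_lt_one₀ (by positivity) ((div_lt_one hp).2 h) two_ne_zero
  · rintro ⟨h0, h1⟩
    have hs : 0 < Real.sqrt u := Real.sqrt_pos.2 h0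
    have hs1 : Real.sqrt u < 1 := by rw [Real.sqrt_lt' one_pos]; simpa using h1
    have hv : wpRoot < wpRoot / Real.sqrt u := by rw [lt_div_iff₀ hs]; nlinarith
    obtain ⟨y, hy, hy2⟩ := ((tendsto_wp_zero.eventually_gt_atTop (wpRoot / Real.sqrt u)).and
      (Ioo_mem_nhdsGT (show (0 : ℝ) < 1 / 2 by norm_num))).exists
    obtain ⟨x, hx, hx2⟩ := isPreconnected_Ioc.intermediate_value
      (show (1 / 2 : ℝ) ∈ Ioc (0 : ℝ) (1 / 2) by norm_num) ⟨hy2.1, hy2.2.le⟩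
      (continuousOn_wp.mono fun x hx => ⟨hx.1, by linarith [hx.2]⟩)
      (show wpRoot / Real.sqrt u ∈ Icc (wp (1 / 2)) (wp y) from ⟨by rw [wp_half]; exact hv.le, hy.le⟩)
    refine ⟨x, ⟨hx.1, hx.2.lt_of_ne ?_⟩, ?_⟩
    · rintro rfl
      rw [wp_half] at hx2
      linarith
    · rw [wpSubst, hx2, div_div_cancel₀ he.ne', Real.sq_sqrt h0.le]

lemma injOn_wpSubst : InjOn wpSubst (Ioo 0 (1 / 2)) := by
  have he := wpRoot_pos
  intro x hx y hy h
  have hpx := he.trans (wpRoot_lt_wp hx)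
  have hpy := he.trans (wpRoot_lt_wp hy)
  have h2 : wpRoot / wp x = wpRoot / wp y :=
    (pow_left_inj₀ (by positivity) (by positivity) two_ne_zero).1 h
  rw [div_eq_div_iff hpx.ne' hpy.ne', mul_right_inj' he.ne'] at h2
  exact strictAntiOn_wp.injOn ⟨hx.1, hx.2.le⟩ ⟨hy.1, hy.2.le⟩ h2.symm

lemma hasDerivAt_wpSubst {x : ℝ} (hx : x ∈ Ioo (0 : ℝ) (1 / 2)) :
    HasDerivAt wpSubst (2 * wpRoot ^ 2 * -wp' x / wp x ^ 3) x := by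
  have hp := wpRoot_pos.trans (wpRoot_lt_wp hx)
  refine (((hasDerivAt_const x wpRoot).div (hasDerivAt_wp ⟨hx.1, by linarith [hx.2]⟩) hp.ne').pow
    2).congr_deriv ?_
  simp
  field_simp

lemma wpSubst_integrand {x : ℝ} (hx : x ∈ Ioo (0 : ℝ) (1 / 2)) :
    |2 * wpRoot ^ 2 * -wp' x / wp x ^ 3| •
      (wpSubst x ^ (1 / 4 - 1 : ℝ) * (1 - wpSubst x) ^ (1 / 2 - 1 : ℝ)) = 4 * Real.sqrt wpRoot := by
  have he := wpRoot_pos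
  have hlt := wpRoot_lt_wp hx
  have hp := he.trans hlt
  have hq := wp'_neg hx
  have hd : 0 < wp x ^ 2 - wpRoot ^ 2 := by nlinarith
  have hq2 : -wp' x = 2 * (Real.sqrt (wp x) * Real.sqrt (wp x ^ 2 - wpRoot ^ 2)) := by
    rw [← Real.sqrt_mul hp.le, ← Real.sqrt_sq (by linarith : 0 ≤ -wp' x), neg_sq,
      wp'_sq ⟨hx.1, by linarith [hx.2]⟩, mul_assoc, Real.sqrt_mul (by norm_num)]
    congr 1
    rw [show (4 : ℝ) = 2 ^ 2 by norm_num, Real.sqrt_sq two_pos.le]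
  have hr : 0 < wpRoot / wp x := div_pos he hp
  have e1 : wpSubst x ^ (1 / 4 - 1 : ℝ) =
      wp x * Real.sqrt (wp x) / (wpRoot * Real.sqrt wpRoot) := by
    rw [wpSubst, ← Real.rpow_natCast, ← Real.rpow_mul hr.le,
      show ((2 : ℕ) : ℝ) * (1 / 4 - 1) = -1 + -(1 / 2) by norm_num, Real.rpow_add hr,
      Real.rpow_neg_one, Real.rpow_neg hr.le, ← Real.sqrt_eq_rpow, Real.sqrt_div he.le, inv_div,
      inv_div, div_mul_div_comm]
  have e2 : (1 - wpSubst x) ^ (1 / 2 - 1 : ℝ) = wp x / Real.sqrt (wp x ^ 2 - wpRoot ^ 2) := by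
    have h1 : 1 - wpSubst x = (wp x ^ 2 - wpRoot ^ 2) / wp x ^ 2 := by
      rw [wpSubst]
      field_simp
    rw [h1, show (1 / 2 - 1 : ℝ) = -(1 / 2) by norm_num, Real.rpow_neg (by positivity),
      ← Real.sqrt_eq_rpow, Real.sqrt_div hd.le, Real.sqrt_sq hp.le, inv_div]
  have hrd := Real.sqrt_pos.2 hd
  have hs := Real.sqrt_pos.2 hp
  have hre := Real.sqrt_pos.2 he
  rw [smul_eq_mul, abs_of_pos (by have := neg_pos.2 hq; positivity), e1, e2, hq2]
  have s1 := Real.sq_sqrt hp.le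
  have s2 := Real.sq_sqrt he.le
  field_simp
  rw [s1, s2]
  ring

lemma integral_beta_quarter_half :
    ∫ u in Ioo (0 : ℝ) 1, u ^ (1 / 4 - 1 : ℝ) * (1 - u) ^ (1 / 2 - 1 : ℝ) =
      Real.Gamma (1 / 4) * Real.Gamma (1 / 2) / Real.Gamma (3 / 4) := by
  have h := ProbabilityTheory.beta_eq_betaIntegralReal (1 / 4) (1 / 2) (by norm_num) (by norm_num)
  rw [ProbabilityTheory.beta, show (1 / 4 + 1 / 2 : ℝ) = 3 / 4 by norm_num] at h
  rw [h, Complex.betaIntegral, intervalIntegral.integral_of_le zero_le_one,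
    integral_Ioc_eq_integral_Ioo, ← Complex.ofReal_re (∫ u in Ioo (0 : ℝ) 1, _),
    ← integral_complex_ofReal]
  congr 1
  refine setIntegral_congr_fun measurableSet_Ioo fun u hu => ?_
  have h1 : 0 ≤ 1 - u := by linarith [hu.2]
  rw [Complex.ofReal_mul, Complex.ofReal_cpow hu.1.le, Complex.ofReal_cpow h1]
  push_cast
  rfl

lemma two_mul_sqrt_wpRoot :
    2 * Real.sqrt wpRoot = Real.Gamma (1 / 4) * Real.Gamma (1 / 2) / Real.Gamma (3 / 4) := by
  rw [← integral_beta_quarter_half, ← wpSubst_image,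
    integral_image_eq_integral_abs_deriv_smul measurableSet_Ioo
      (fun x hx => (hasDerivAt_wpSubst hx).hasDerivWithinAt) injOn_wpSubst,
    setIntegral_congr_fun measurableSet_Ioo fun x hx => wpSubst_integrand hx]
  simp
  ring

lemma gaussian_G_four_re :
    (gaussianPeriods.G 4).re = Real.Gamma (1 / 4) ^ 8 / (960 * π ^ 2) := by
  have h := two_mul_sqrt_wpRoot
  have hr := Real.Gamma_mul_Gamma_one_sub (1 / 4)
  rw [show (1 - 1 / 4 : ℝ) = 3 / 4 by norm_num, show π * (1 / 4) = π / 4 by ring,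
    Real.sin_pi_div_four] at hr
  have hg : 0 < Real.Gamma (1 / 4) := Real.Gamma_pos_of_pos (by norm_num)
  have hg3 : 0 < Real.Gamma (3 / 4) := Real.Gamma_pos_of_pos (by norm_num)
  have hG : Real.Gamma (3 / 4) = 2 * π / (√2 * Real.Gamma (1 / 4)) := by
    field_simp at hr ⊢
    linear_combination hr
  have h8 : (2 * √wpRoot) ^ 4 = 16 * (15 * (gaussianPeriods.G 4).re) := by
    rw [← wpRoot_sq, mul_pow, show √wpRoot ^ 4 = (√wpRoot ^ 2) ^ 2 by ring,
      Real.sq_sqrt wpRoot_pos.le]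
    norm_num
  rw [h, hG, Real.Gamma_one_half_eq, div_pow, div_pow, mul_pow, mul_pow, mul_pow √2,
    show √π ^ 4 = (√π ^ 2) ^ 2 by ring, Real.sq_sqrt Real.pi_pos.le,
    show (√2) ^ 4 = ((√2) ^ 2) ^ 2 by ring, Real.sq_sqrt two_pos.le] at h8
  have hpi := Real.pi_pos
  field_simp at h8 ⊢
  linarith

end

theorem stmt_12 :
    (∫ k in (0:ℝ)..(1:ℝ), (EllK' k)^3)
        = 5 * ∫ k in (0:ℝ)..(1:ℝ), k * (EllK' k)^3 ∧
      (∫ k in (0:ℝ)..(1:ℝ), (EllK' k)^3)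
        = Real.Gamma (1/4) ^ 8 / (128 * π^2) := by
  simp only [EllK'_eq_trigK', intervalIntegral.integral_of_le zero_le_one,
    integral_Ioc_eq_integral_Ioo]
  refine ⟨by rw [integral_trigK'_cube, integral_mul_trigK'_cube], ?_⟩
  rw [integral_trigK'_cube, integral_mul_trigK_cube_eq, gaussian_G_four_re]
  ring
end

section
/- ∫₀¹ K(k)/√(1-k²) dk = Γ(1/4)⁴/(16π). -/
open scoped Real
open MeasureTheory

open Set ENNReal

theorem lintegral_Ioi_scale {c : ℝ} (hc : 0 < c) (f : ℝ → ℝ≥0∞) :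
    ∫⁻ x in Ioi 0, f x = ∫⁻ x in Ioi 0, ENNReal.ofReal c * f (c * x) := by
  have himg : (fun x : ℝ => c * x) '' Ioi 0 = Ioi 0 := by
    rw [image_mul_left_Ioi hc, mul_zero]
  have h := MeasureTheory.lintegral_image_eq_lintegral_abs_deriv_mul (s := Ioi (0 : ℝ)) (f := fun x => c * x)
    (f' := fun _ => c) measurableSet_Ioi
    (fun x _ => by simpa using ((hasDerivAt_id x).const_mul c).hasDerivWithinAt)
    (mul_right_injective₀ hc.ne').injOn f
  rwa [himg, abs_of_pos hc] at h

/-- The beta integral over the half-line, after the substitution `v = 1 / (1 + t ^ c)`. -/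
theorem lintegral_Ioi_rpow_mul_one_add_rpow {α β c : ℝ} (hα : 0 < α) (hβ : 0 < β) (hc : 0 < c) :
    ∫⁻ t in Ioi (0 : ℝ), ENNReal.ofReal (t ^ (c * β - 1) * (1 + t ^ c) ^ (-(α + β)))
      = ENNReal.ofReal (ProbabilityTheory.beta α β / c) := by
  have hb := ProbabilityTheory.beta_pos hα hβ
  have himg : (fun t : ℝ => (1 + t ^ c)⁻¹) '' Ioi 0 = Ioo 0 1 := by
    ext v
    constructor
    · rintro ⟨t, ht, rfl⟩
      have : 0 < t ^ c := Real.rpow_pos_of_pos ht c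
      exact ⟨by positivity, inv_lt_one_of_one_lt₀ (by linarith)⟩
    · rintro ⟨h0, h1⟩
      have h2 : 0 < v⁻¹ - 1 := sub_pos.2 ((one_lt_inv₀ h0).2 h1)
      refine ⟨(v⁻¹ - 1) ^ c⁻¹, Real.rpow_pos_of_pos h2 _, ?_⟩
      simp only
      rw [Real.rpow_inv_rpow h2.le hc.ne']
      simp
  have hinj : InjOn (fun t : ℝ => (1 + t ^ c)⁻¹) (Ioi 0) := by
    intro x hx y hy h
    have h' : x ^ c = y ^ c := by simpa using h
    exact Real.rpow_left_injOn hc.ne' (mem_Ioi.1 hx).le (mem_Ioi.1 hy).le h'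
  have h := MeasureTheory.lintegral_image_eq_lintegral_abs_deriv_mul (s := Ioi (0 : ℝ))
    (f := fun t => (1 + t ^ c)⁻¹)
    (f' := fun t => -(c * t ^ (c - 1)) / (1 + t ^ c) ^ 2) measurableSet_Ioi
    (fun t ht => by
      have ht' : 0 < t ^ c := Real.rpow_pos_of_pos ht c
      exact (((Real.hasDerivAt_rpow_const (Or.inl (ne_of_gt ht))).const_add 1).inv
        (by positivity)).hasDerivWithinAt) hinj
    (fun x => ENNReal.ofReal (1 / ProbabilityTheory.beta α β * x ^ (α - 1) * (1 - x) ^ (β - 1)))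
  rw [himg, ← ProbabilityTheory.lintegral_betaPDF,
    ProbabilityTheory.lintegral_betaPDF_eq_one hα hβ] at h
  have key : ∀ t ∈ Ioi (0 : ℝ),
      ENNReal.ofReal (t ^ (c * β - 1) * (1 + t ^ c) ^ (-(α + β)))
      = ENNReal.ofReal (ProbabilityTheory.beta α β / c) *
        (ENNReal.ofReal |-(c * t ^ (c - 1)) / (1 + t ^ c) ^ 2| *
        ENNReal.ofReal (1 / ProbabilityTheory.beta α β * ((1 + t ^ c)⁻¹) ^ (α - 1) *
          (1 - (1 + t ^ c)⁻¹) ^ (β - 1))) := by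
    intro t ht
    have ht : 0 < t := ht
    have ht' : 0 < t ^ c := Real.rpow_pos_of_pos ht c
    have hs : 0 < 1 + t ^ c := by positivity
    have e1 : 1 - (1 + t ^ c)⁻¹ = t ^ c * (1 + t ^ c)⁻¹ := by field_simp; ring
    rw [← ENNReal.ofReal_mul (abs_nonneg _), ← ENNReal.ofReal_mul (by positivity), e1,
      Real.mul_rpow ht'.le (by positivity), ← Real.rpow_mul ht.le,
      neg_div, abs_neg, abs_of_pos (by positivity), Real.inv_rpow hs.le, Real.inv_rpow hs.le,
      ← Real.rpow_neg hs.le, ← Real.rpow_neg hs.le]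
    congr 1
    have e2 : t ^ (c * β - 1) = t ^ (c - 1) * t ^ (c * (β - 1)) := by
      rw [← Real.rpow_add ht]; ring_nf
    have e3 : (1 + t ^ c) ^ (-(α + β))
        = (1 + t ^ c) ^ (-(α - 1)) * (1 + t ^ c) ^ (-(β - 1)) / (1 + t ^ c) ^ 2 := by
      rw [← Real.rpow_add hs, ← Real.rpow_natCast _ 2, ← Real.rpow_sub hs]
      push_cast; ring_nf
    rw [e2, e3]
    field_simp
  rw [setLIntegral_congr_fun measurableSet_Ioi key, lintegral_const_mul' _ _ ENNReal.ofReal_ne_top,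
    ← h, mul_one]

theorem lintegral_Ioo_neg_one_one_of_even {f : ℝ → ℝ≥0∞} (hf : ∀ x, f (-x) = f x) :
    ∫⁻ x in Ioo (-1) 1, f x = 2 * ∫⁻ x in Ioo 0 1, f x := by
  have hneg := MeasureTheory.lintegral_image_eq_lintegral_abs_deriv_mul (s := Ioo (0 : ℝ) 1)
    (f := fun x => -x) (f' := fun _ => -1) measurableSet_Ioo
    (fun x _ => (hasDerivAt_neg x).hasDerivWithinAt) neg_injective.injOn f
  simp only [image_neg_eq_neg, neg_Ioo, neg_zero, abs_neg, abs_one, ENNReal.ofReal_one, one_mul,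
    hf] at hneg
  have hset : Ioo (-1 : ℝ) 1 = Ioc (-1) 0 ∪ Ioo 0 1 :=
    (Ioc_union_Ioo_eq_Ioo (by norm_num) (by norm_num)).symm
  rw [hset, lintegral_union measurableSet_Ioo
    (by rw [Set.disjoint_left]; intro x h1 h2; exact absurd h1.2 (not_le.2 h2.1)),
    ← setLIntegral_congr (Ioo_ae_eq_Ioc (a := (-1 : ℝ)) (b := 0)), hneg, two_mul]

/-- The substitution `k = (1 - y ^ 2) / (1 + y ^ 2)`. -/
theorem lintegral_Ioo_neg_one_one_eq (f : ℝ → ℝ≥0∞) :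
    ∫⁻ k in Ioo (-1) 1, f k = ∫⁻ y in Ioi (0 : ℝ),
      ENNReal.ofReal (4 * y / (1 + y ^ 2) ^ 2) * f ((1 - y ^ 2) / (1 + y ^ 2)) := by
  have himg : (fun y : ℝ => (1 - y ^ 2) / (1 + y ^ 2)) '' Ioi 0 = Ioo (-1) 1 := by
    ext v
    constructor
    · rintro ⟨t, ht, rfl⟩
      have : 0 < t ^ 2 := pow_pos ht 2
      constructor
      · simp only; rw [lt_div_iff₀ (by positivity)]; linarith
      · simp only; rw [div_lt_iff₀ (by positivity)]; linarith
    · rintro ⟨h0, h1⟩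
      have h2 : 0 < (1 - v) / (1 + v) := div_pos (by linarith) (by linarith)
      refine ⟨√((1 - v) / (1 + v)), Real.sqrt_pos.2 h2, ?_⟩
      simp only
      rw [Real.sq_sqrt h2.le]
      have : 1 + v ≠ 0 := by linarith
      field_simp
      ring
  have hinj : InjOn (fun y : ℝ => (1 - y ^ 2) / (1 + y ^ 2)) (Ioi 0) := by
    intro x hx y hy h
    have h' : x ^ 2 = y ^ 2 := by
      simp only at h
      rw [div_eq_div_iff (by positivity) (by positivity)] at h
      linarith
    exact (pow_left_inj₀ (le_of_lt hx) (le_of_lt hy) two_ne_zero).1 h'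
  have h := MeasureTheory.lintegral_image_eq_lintegral_abs_deriv_mul (s := Ioi (0 : ℝ))
    (f := fun y => (1 - y ^ 2) / (1 + y ^ 2))
    (f' := fun y => -(4 * y / (1 + y ^ 2) ^ 2)) measurableSet_Ioi
    (fun y _ => by
      have := (((hasDerivAt_pow 2 y).const_sub 1).div ((hasDerivAt_pow 2 y).const_add 1)
        (by positivity : 1 + y ^ 2 ≠ 0))
      refine (this.congr_deriv ?_).hasDerivWithinAt
      field_simp
      ring) hinj f
  rw [himg] at h
  rw [h]
  refine setLIntegral_congr_fun measurableSet_Ioi fun y hy => ?_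
  have hy : 0 < y := hy
  rw [abs_neg, abs_of_pos (by positivity)]

theorem lintegral_Ioi_rpow_mul_add_mul_rpow {α β c A B : ℝ} (hα : 0 < α) (hβ : 0 < β)
    (hc : 0 < c) (hA : 0 < A) (hB : 0 < B) :
    ∫⁻ t in Ioi (0 : ℝ), ENNReal.ofReal (t ^ (c * β - 1) * (A + B * t ^ c) ^ (-(α + β)))
      = ENNReal.ofReal (A ^ (-α) * B ^ (-β) * (ProbabilityTheory.beta α β / c)) := by
  have hs : 0 < (A / B) ^ c⁻¹ := by positivity
  rw [lintegral_Ioi_scale hs, ENNReal.ofReal_mul (by positivity),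
    ← lintegral_Ioi_rpow_mul_one_add_rpow hα hβ hc, ← lintegral_const_mul' _ _ ENNReal.ofReal_ne_top]
  refine setLIntegral_congr_fun measurableSet_Ioi fun t ht => ?_
  have ht : 0 < t := ht
  rw [← ENNReal.ofReal_mul hs.le, ← ENNReal.ofReal_mul (by positivity)]
  congr 1
  have hsc : ((A / B) ^ c⁻¹) ^ c = A / B := Real.rpow_inv_rpow (by positivity) hc.ne'
  have e1 : A + B * ((A / B) ^ c⁻¹ * t) ^ c = A * (1 + t ^ c) := by
    rw [Real.mul_rpow hs.le ht.le, hsc]; field_simp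
  have e2 : (A / B) ^ c⁻¹ * ((A / B) ^ c⁻¹) ^ (c * β - 1) = A ^ β * B ^ (-β) := by
    rw [Real.rpow_sub_one hs.ne', Real.rpow_mul hs.le, hsc, Real.div_rpow hA.le hB.le β,
      Real.rpow_neg hB.le]
    field_simp
  have e3 : A ^ (-(α + β)) = A ^ (-α) * A ^ (-β) := by rw [← Real.rpow_add hA]; ring_nf
  have e4 : A ^ β * A ^ (-β) = 1 := by rw [← Real.rpow_add hA]; simp
  rw [e1, Real.mul_rpow hs.le ht.le, Real.mul_rpow hA.le (by positivity), e3]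
  linear_combination (A ^ (-α) * A ^ (-β) * t ^ (c * β - 1) * (1 + t ^ c) ^ (-(α + β))) * e2 +
    (A ^ (-α) * B ^ (-β) * t ^ (c * β - 1) * (1 + t ^ c) ^ (-(α + β))) * e4

theorem lintegral_Ioi_inv_add_mul_sq {A B : ℝ} (hA : 0 < A) (hB : 0 < B) :
    ∫⁻ x in Ioi (0 : ℝ), ENNReal.ofReal (1 / (A + B * x ^ 2))
      = ENNReal.ofReal (π / 2) * ENNReal.ofReal (1 / √(A * B)) := by
  have h := lintegral_Ioi_rpow_mul_add_mul_rpow (α := 1 / 2) (β := 1 / 2) (c := 2)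
    (by norm_num) (by norm_num) (by norm_num) hA hB
  have hb : ProbabilityTheory.beta (1 / 2) (1 / 2) = π := by
    rw [ProbabilityTheory.beta, Real.Gamma_one_half_eq, Real.mul_self_sqrt Real.pi_pos.le]
    norm_num
  rw [hb] at h
  rw [← ENNReal.ofReal_mul (by positivity)]
  have e : π / 2 * (1 / √(A * B)) = A ^ (-(1 / 2) : ℝ) * B ^ (-(1 / 2) : ℝ) * (π / 2) := by
    rw [Real.rpow_neg hA.le, Real.rpow_neg hB.le, ← Real.sqrt_eq_rpow, ← Real.sqrt_eq_rpow,
      Real.sqrt_mul hA.le]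
    field_simp
  rw [e, ← h]
  norm_num [Real.rpow_neg_one]

theorem lintegral_Ioi_inv_add_mul_pow_four {A a b : ℝ} (hA : 0 < A) (ha : 0 < a) (hb : 0 < b) :
    ∫⁻ y in Ioi (0 : ℝ), ENNReal.ofReal (1 / (A + a ^ 2 * b ^ 2 * y ^ 4))
      = ENNReal.ofReal (A ^ (-(3 / 4) : ℝ) * a ^ (-(1 / 2) : ℝ) * b ^ (-(1 / 2) : ℝ)
          * (ProbabilityTheory.beta (3 / 4) (1 / 4) / 4)) := by
  have h := lintegral_Ioi_rpow_mul_add_mul_rpow (α := 3 / 4) (β := 1 / 4) (c := 4)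
    (B := a ^ 2 * b ^ 2) (by norm_num) (by norm_num) (by norm_num) hA (by positivity)
  have e : ∀ x : ℝ, 0 < x → (x ^ 2) ^ (-(1 / 4) : ℝ) = x ^ (-(1 / 2) : ℝ) := fun x hx => by
    rw [← Real.rpow_natCast_mul hx.le]; norm_num
  rw [Real.mul_rpow (by positivity) (by positivity), e a ha, e b hb, ← mul_assoc] at h
  rw [← h]
  norm_num [Real.rpow_neg_one]

/-- The spherical part of Watson's triple integral. -/
theorem lintegral_Ioi_Ioi_eq_beta_mul_beta :
    ∫⁻ a in Ioi (0 : ℝ), ∫⁻ b in Ioi (0 : ℝ), ENNReal.ofReal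
      ((1 + a ^ 2 + b ^ 2) ^ (-(3 / 4) : ℝ) * a ^ (-(1 / 2) : ℝ) * b ^ (-(1 / 2) : ℝ))
    = ENNReal.ofReal (ProbabilityTheory.beta (1 / 2) (1 / 4) / 2) *
      ENNReal.ofReal (ProbabilityTheory.beta (1 / 4) (1 / 4) / 2) := by
  have hβ := ProbabilityTheory.beta_pos (α := 1 / 2) (β := 1 / 4) (by norm_num) (by norm_num)
  have inner : ∀ a ∈ Ioi (0 : ℝ), ∫⁻ b in Ioi (0 : ℝ), ENNReal.ofReal
      ((1 + a ^ 2 + b ^ 2) ^ (-(3 / 4) : ℝ) * a ^ (-(1 / 2) : ℝ) * b ^ (-(1 / 2) : ℝ))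
      = ENNReal.ofReal (ProbabilityTheory.beta (1 / 2) (1 / 4) / 2) *
        ENNReal.ofReal (a ^ (2 * (1 / 4) - 1 : ℝ) * (1 + a ^ (2 : ℝ)) ^ (-(1 / 4 + 1 / 4) : ℝ)) := by
    intro a ha
    have ha : 0 < a := ha
    have h := lintegral_Ioi_rpow_mul_add_mul_rpow (α := 1 / 2) (β := 1 / 4) (c := 2)
      (A := 1 + a ^ 2) (B := 1) (by norm_num) (by norm_num) (by norm_num) (by positivity) one_pos
    have h' := congrArg (fun u => ENNReal.ofReal (a ^ (-(1 / 2) : ℝ)) * u) h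
    rw [← lintegral_const_mul' _ _ ENNReal.ofReal_ne_top, ← ENNReal.ofReal_mul (by positivity)]
      at h'
    rw [← ENNReal.ofReal_mul (by positivity)]
    convert h' using 2
    · ext b
      rw [← ENNReal.ofReal_mul (by positivity)]
      norm_num
      ring_nf
    · norm_num
      ring
  rw [setLIntegral_congr_fun measurableSet_Ioi inner,
    lintegral_const_mul' _ _ ENNReal.ofReal_ne_top,
    lintegral_Ioi_rpow_mul_one_add_rpow (by norm_num) (by norm_num) (by norm_num)]

theorem beta_prod_eq :
    ProbabilityTheory.beta (3 / 4) (1 / 4) / 4 * (ProbabilityTheory.beta (1 / 2) (1 / 4) / 2 *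
      (ProbabilityTheory.beta (1 / 4) (1 / 4) / 2)) = Real.Gamma (1 / 4) ^ 4 / 16 := by
  have h : Real.Gamma (3 / 4) ≠ 0 := (Real.Gamma_pos_of_pos (by norm_num)).ne'
  have h1 : (3 / 4 + 1 / 4 : ℝ) = 1 := by norm_num
  have h2 : (1 / 2 + 1 / 4 : ℝ) = 3 / 4 := by norm_num
  have h3 : (1 / 4 + 1 / 4 : ℝ) = 1 / 2 := by norm_num
  have h4 : Real.Gamma (1 / 2) ≠ 0 := (Real.Gamma_pos_of_pos (by norm_num)).ne'
  simp only [ProbabilityTheory.beta, h1, h2, h3, Real.Gamma_one]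
  field_simp
  norm_num

/-- Watson's triple integral. -/
theorem lintegral_watson :
    ∫⁻ y in Ioi (0 : ℝ), ∫⁻ z in Ioi (0 : ℝ), ∫⁻ x in Ioi (0 : ℝ),
      ENNReal.ofReal (1 / (y ^ 2 + z ^ 2 + (1 + y ^ 2 * z ^ 2) * x ^ 2))
      = ENNReal.ofReal (Real.Gamma (1 / 4) ^ 4 / 16) := by
  have hβ : ∀ α β : ℝ, 0 < α → 0 < β → 0 ≤ ProbabilityTheory.beta α β :=
    fun α β hα hβ => (ProbabilityTheory.beta_pos hα hβ).le
  have scaled : ∀ y ∈ Ioi (0 : ℝ), ∫⁻ z in Ioi (0 : ℝ), ∫⁻ x in Ioi (0 : ℝ),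
      ENNReal.ofReal (1 / (y ^ 2 + z ^ 2 + (1 + y ^ 2 * z ^ 2) * x ^ 2))
      = ∫⁻ a in Ioi (0 : ℝ), ∫⁻ b in Ioi (0 : ℝ),
        ENNReal.ofReal (1 / (1 + a ^ 2 + b ^ 2 + a ^ 2 * b ^ 2 * y ^ 4)) := by
    intro y hy
    have hy : 0 < y := hy
    rw [lintegral_Ioi_scale hy]
    refine lintegral_congr fun a => ?_
    rw [lintegral_Ioi_scale hy, ← lintegral_const_mul' _ _ ENNReal.ofReal_ne_top]
    refine lintegral_congr fun b => ?_
    rw [← ENNReal.ofReal_mul hy.le, ← ENNReal.ofReal_mul hy.le]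
    congr 1
    field_simp
    ring
  rw [setLIntegral_congr_fun measurableSet_Ioi scaled,
    lintegral_lintegral_swap (by unfold Function.uncurry; fun_prop)]
  have swapped : ∀ a ∈ Ioi (0 : ℝ), ∫⁻ y in Ioi (0 : ℝ), ∫⁻ b in Ioi (0 : ℝ),
      ENNReal.ofReal (1 / (1 + a ^ 2 + b ^ 2 + a ^ 2 * b ^ 2 * y ^ 4))
      = ENNReal.ofReal (ProbabilityTheory.beta (3 / 4) (1 / 4) / 4) *
        ∫⁻ b in Ioi (0 : ℝ), ENNReal.ofReal
        ((1 + a ^ 2 + b ^ 2) ^ (-(3 / 4) : ℝ) * a ^ (-(1 / 2) : ℝ) * b ^ (-(1 / 2) : ℝ)) := by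
    intro a ha
    have ha : 0 < a := ha
    rw [lintegral_lintegral_swap (by unfold Function.uncurry; fun_prop),
      ← lintegral_const_mul' _ _ ENNReal.ofReal_ne_top]
    refine setLIntegral_congr_fun measurableSet_Ioi fun b hb => ?_
    have hb : 0 < b := hb
    rw [lintegral_Ioi_inv_add_mul_pow_four (by positivity) ha hb,
      ← ENNReal.ofReal_mul (div_nonneg (hβ _ _ (by norm_num) (by norm_num)) (by norm_num)),
      mul_comm]
  rw [setLIntegral_congr_fun measurableSet_Ioi swapped,
    lintegral_const_mul' _ _ ENNReal.ofReal_ne_top, lintegral_Ioi_Ioi_eq_beta_mul_beta,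
    ← ENNReal.ofReal_mul (div_nonneg (hβ _ _ (by norm_num) (by norm_num)) (by norm_num)),
    ← ENNReal.ofReal_mul (div_nonneg (hβ _ _ (by norm_num) (by norm_num)) (by norm_num)),
    beta_prod_eq]

theorem lintegral_Ioi_Ioi_inv_sqrt :
    ∫⁻ y in Ioi (0 : ℝ), ∫⁻ z in Ioi (0 : ℝ),
      ENNReal.ofReal (1 / √((y ^ 2 + z ^ 2) * (1 + y ^ 2 * z ^ 2)))
      = ENNReal.ofReal (Real.Gamma (1 / 4) ^ 4 / (8 * π)) := by
  have h := lintegral_watson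
  have inner : ∀ y ∈ Ioi (0 : ℝ), ∫⁻ z in Ioi (0 : ℝ), ∫⁻ x in Ioi (0 : ℝ),
      ENNReal.ofReal (1 / (y ^ 2 + z ^ 2 + (1 + y ^ 2 * z ^ 2) * x ^ 2))
      = ENNReal.ofReal (π / 2) * ∫⁻ z in Ioi (0 : ℝ),
        ENNReal.ofReal (1 / √((y ^ 2 + z ^ 2) * (1 + y ^ 2 * z ^ 2))) := by
    intro y hy
    have hy : 0 < y := hy
    rw [← lintegral_const_mul' _ _ ENNReal.ofReal_ne_top]
    exact lintegral_congr fun z => lintegral_Ioi_inv_add_mul_sq (by positivity) (by positivity)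
  rw [setLIntegral_congr_fun measurableSet_Ioi inner,
    lintegral_const_mul' _ _ ENNReal.ofReal_ne_top] at h
  have hπ : ENNReal.ofReal (π / 2) ≠ 0 := by
    rw [ENNReal.ofReal_ne_zero_iff]; positivity
  rw [← ENNReal.mul_right_inj hπ ENNReal.ofReal_ne_top, h, ← ENNReal.ofReal_mul (by positivity)]
  congr 1
  field_simp
  norm_num

theorem lintegral_inv_sqrt_Ioo :
    ∫⁻ k in Ioo (0 : ℝ) 1, ∫⁻ x in Ioo (0 : ℝ) 1,
      ENNReal.ofReal (1 / √((1 - x ^ 2) * (1 - k ^ 2 * x ^ 2)) / √(1 - k ^ 2))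
      = ENNReal.ofReal (Real.Gamma (1 / 4) ^ 4 / (16 * π)) := by
  have folded : ∫⁻ k in Ioo (-1 : ℝ) 1, ∫⁻ x in Ioo (-1 : ℝ) 1,
      ENNReal.ofReal (1 / √((1 - x ^ 2) * (1 - k ^ 2 * x ^ 2)) / √(1 - k ^ 2))
      = 4 * ∫⁻ k in Ioo (0 : ℝ) 1, ∫⁻ x in Ioo (0 : ℝ) 1,
      ENNReal.ofReal (1 / √((1 - x ^ 2) * (1 - k ^ 2 * x ^ 2)) / √(1 - k ^ 2)) := by
    rw [lintegral_Ioo_neg_one_one_of_even (by simp)]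
    have inner : ∀ k : ℝ, ∫⁻ x in Ioo (-1 : ℝ) 1,
        ENNReal.ofReal (1 / √((1 - x ^ 2) * (1 - k ^ 2 * x ^ 2)) / √(1 - k ^ 2))
        = 2 * ∫⁻ x in Ioo (0 : ℝ) 1,
        ENNReal.ofReal (1 / √((1 - x ^ 2) * (1 - k ^ 2 * x ^ 2)) / √(1 - k ^ 2)) := fun k =>
      lintegral_Ioo_neg_one_one_of_even (by simp)
    simp only [inner]
    rw [lintegral_const_mul' _ _ (by simp), ← mul_assoc]
    norm_num
  have unfolded : ∫⁻ k in Ioo (-1 : ℝ) 1, ∫⁻ x in Ioo (-1 : ℝ) 1,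
      ENNReal.ofReal (1 / √((1 - x ^ 2) * (1 - k ^ 2 * x ^ 2)) / √(1 - k ^ 2))
      = 2 * ∫⁻ y in Ioi (0 : ℝ), ∫⁻ z in Ioi (0 : ℝ),
      ENNReal.ofReal (1 / √((y ^ 2 + z ^ 2) * (1 + y ^ 2 * z ^ 2))) := by
    rw [lintegral_Ioo_neg_one_one_eq, ← lintegral_const_mul' _ _ (by simp)]
    refine setLIntegral_congr_fun measurableSet_Ioi fun y hy => ?_
    have hy : 0 < y := hy
    rw [lintegral_Ioo_neg_one_one_eq, ← lintegral_const_mul' _ _ ENNReal.ofReal_ne_top,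
      ← lintegral_const_mul' _ _ (by simp : (2 : ℝ≥0∞) ≠ ⊤)]
    refine setLIntegral_congr_fun measurableSet_Ioi fun z hz => ?_
    have hz : 0 < z := hz
    have two : (2 : ℝ≥0∞) = ENNReal.ofReal 2 := by simp
    rw [two, ← ENNReal.ofReal_mul (by positivity), ← ENNReal.ofReal_mul (by positivity),
      ← ENNReal.ofReal_mul (by positivity)]
    congr 1
    have e1 : √(1 - ((1 - y ^ 2) / (1 + y ^ 2)) ^ 2) = 2 * y / (1 + y ^ 2) := by
      rw [← Real.sqrt_sq (by positivity : 0 ≤ 2 * y / (1 + y ^ 2))]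
      congr 1
      field_simp
      ring
    have e2 : (1 - ((1 - z ^ 2) / (1 + z ^ 2)) ^ 2) *
        (1 - ((1 - y ^ 2) / (1 + y ^ 2)) ^ 2 * ((1 - z ^ 2) / (1 + z ^ 2)) ^ 2)
        = (4 * z / ((1 + z ^ 2) ^ 2 * (1 + y ^ 2))) ^ 2 *
          ((y ^ 2 + z ^ 2) * (1 + y ^ 2 * z ^ 2)) := by
      field_simp
      ring
    rw [e1, e2, Real.sqrt_mul (by positivity), Real.sqrt_sq (by positivity)]
    field_simp
    norm_num
  rw [folded, lintegral_Ioi_Ioi_inv_sqrt] at unfolded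
  have four : (4 : ℝ≥0∞) ≠ 0 := by simp
  rw [← ENNReal.mul_right_inj four (by simp), unfolded]
  have two : (2 : ℝ≥0∞) = ENNReal.ofReal 2 := by simp
  have four' : (4 : ℝ≥0∞) = ENNReal.ofReal 4 := by simp
  rw [two, four', ← ENNReal.ofReal_mul (by positivity), ← ENNReal.ofReal_mul (by positivity)]
  congr 1
  field_simp
  norm_num

theorem EllK_div_sqrt_eq_toReal (k : ℝ) :
    EllK k / √(1 - k ^ 2) = (∫⁻ x in Ioo (0 : ℝ) 1,
      ENNReal.ofReal (1 / √((1 - x ^ 2) * (1 - k ^ 2 * x ^ 2)) / √(1 - k ^ 2))).toReal := by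
  rw [EllK, intervalIntegral.integral_of_le zero_le_one, integral_Ioc_eq_integral_Ioo,
    ← integral_div, integral_eq_lintegral_of_nonneg_ae]
  · exact Filter.Eventually.of_forall fun x => by positivity
  · exact Measurable.aestronglyMeasurable (by fun_prop)

theorem stmt_14 :
    ∫ k in (0:ℝ)..(1:ℝ), EllK k / Real.sqrt (1 - k^2)
      = Real.Gamma (1/4) ^ 4 / (16 * π) := by
  have hmeas : Measurable fun k : ℝ => ∫⁻ x in Ioo (0 : ℝ) 1,
      ENNReal.ofReal (1 / √((1 - x ^ 2) * (1 - k ^ 2 * x ^ 2)) / √(1 - k ^ 2)) :=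
    Measurable.lintegral_prod_right (by unfold Function.uncurry; fun_prop)
  simp only [EllK_div_sqrt_eq_toReal]
  rw [intervalIntegral.integral_of_le zero_le_one, integral_Ioc_eq_integral_Ioo,
    integral_toReal hmeas.aemeasurable
      (ae_lt_top hmeas (by rw [lintegral_inv_sqrt_Ioo]; exact ENNReal.ofReal_ne_top)),
    lintegral_inv_sqrt_Ioo, ENNReal.toReal_ofReal (by positivity)]
end
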